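/- Let (K, v_K) be a field with a non-trivial real-valued valuation, let f ∈ K°[T] be a monic irreducible polynomial whose formal derivative f′ is zero (so that L = K[T]/(f) is a finite inseparable field extension of K), and let v_L be a real-valued valuation on L extending v_K, with rings of integers K° and L°. Then H₁(𝕃_{L°/K°}) is a nonzero torsion-free L°-module, and the L-vector space L ⊗_{L°} H₁(𝕃_{L°/K°}) is one-dimensional. -/

import Mathlib

set_option synthInstance.maxHeartbeats 800000
set_option maxHeartbeats 1600000

noncomputable section

/-- The unit ball (ring of integers) of a real-valued additive semi-valuation. -/
def AddValuation.unitBall {A : Type*} [CommRing A] (v : AddValuation A (WithTop ℝ)) :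
    Subring A where
  carrier := {a | 0 ≤ v a}
  zero_mem' := by simp only [Set.mem_setOf_eq, AddValuation.map_zero]; exact le_top
  one_mem' := by simp only [Set.mem_setOf_eq, AddValuation.map_one]; exact le_refl _
  add_mem' := by
    intro a b ha hb
    exact le_trans (le_min ha hb) (v.map_add a b)
  mul_mem' := by
    intro a b ha hb
    simp only [Set.mem_setOf_eq, AddValuation.map_mul]
    exact add_nonneg ha hb
  neg_mem' := by
    intro a ha
    simpa only [Set.mem_setOf_eq, AddValuation.map_neg] using ha

/-- A real-valued additive valuation on a field is *non-trivial* if it does not vanish on all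
of `K^×`. -/
def AddValuation.IsNontrivial {K : Type*} [Field K] (v : AddValuation K (WithTop ℝ)) : Prop :=
  ∃ x : K, x ≠ 0 ∧ v x ≠ 0

open Polynomial in
lemma mapC_divMod {Q : Type*} [CommRing Q] (I : Ideal Q) (g : Q[X]) (hg : g.Monic) (f : Q[X])
    (hf : f ∈ Ideal.map C I) : f %ₘ g ∈ Ideal.map C I ∧ f /ₘ g ∈ Ideal.map C I := by
  have key : ∀ h : Q[X], h ∈ Ideal.map C I ↔ h.map (Ideal.Quotient.mk I) = 0 := by
    intro h
    rw [Ideal.mem_map_C_iff, Polynomial.ext_iff]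
    simp [Ideal.Quotient.eq_zero_iff_mem]
  rw [key] at hf
  rw [key, key, Polynomial.map_modByMonic _ hg, Polynomial.map_divByMonic _ hg, hf]
  simp

open Polynomial in
lemma poly_step {Q L : Type*} [CommRing Q] [CommRing L] [IsDomain L] (φ : Q →+* L) (c : Q)
    (hc : φ c ≠ 0)
    (hG : ∀ j ∈ RingHom.ker φ, c * j ∈ RingHom.ker φ ^ 2 → j ∈ RingHom.ker φ ^ 2)
    (g : Q[X]) (hg : g.Monic) (a : L) (hga : eval₂ φ a g = 0)
    (H : ∀ f : Q[X], f.degree < g.degree → eval₂ φ a f = 0 → ∀ i, f.coeff i ∈ RingHom.ker φ)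
    (f : Q[X]) (hf : f ∈ RingHom.ker (eval₂RingHom φ a))
    (hcf : C c * f ∈ RingHom.ker (eval₂RingHom φ a) ^ 2) :
    f ∈ RingHom.ker (eval₂RingHom φ a) ^ 2 := by
  nontriviality Q
  set J := RingHom.ker φ with hJ
  set J' := RingHom.ker (eval₂RingHom φ a) with hJ'
  have hmem : ∀ f, f ∈ J' ↔ eval₂ φ a f = 0 := fun f => by simp [hJ', RingHom.mem_ker]
  have hmap : Ideal.map C J ≤ J' := by
    rw [Ideal.map_le_iff_le_comap]
    intro x hx
    rw [Ideal.mem_comap, hmem, eval₂_C]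
    exact hx
  have hgJ : g ∈ J' := (hmem g).2 hga
  have hmap2 : Ideal.map C (J ^ 2) ≤ J' ^ 2 := by
    rw [Ideal.map_pow]; exact Ideal.pow_right_mono hmap 2
  have hmod : ∀ f ∈ J', f %ₘ g ∈ Ideal.map C J := by
    intro f hf
    rw [Ideal.mem_map_C_iff]
    apply H _ (degree_modByMonic_lt f hg)
    have h1 := modByMonic_add_div f g
    have : f %ₘ g = f - g * (f /ₘ g) := by rw [eq_sub_iff_add_eq, h1]
    rw [this, eval₂_sub, eval₂_mul, hga, (hmem f).1 hf]; simp
  have hJ'eq : J' = Ideal.map C J ⊔ Ideal.span {g} := by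
    apply le_antisymm
    · intro f hf
      rw [← modByMonic_add_div f g]
      exact Ideal.add_mem _ (Ideal.mem_sup_left (hmod f hf))
        (Ideal.mem_sup_right (Ideal.mem_span_singleton.2 ⟨_, rfl⟩))
    · exact sup_le hmap ((Ideal.span_singleton_le_iff_mem _).2 hgJ)
  have hsq : J' ^ 2 ≤ Ideal.map C (J ^ 2) ⊔ Ideal.span {g} * J' := by
    conv_lhs => rw [pow_two]
    conv_lhs => rw [hJ'eq]
    rw [Ideal.sup_mul, Ideal.mul_sup, ← hJ'eq, ← Ideal.map_mul, ← pow_two]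
    refine sup_le (sup_le le_sup_left (le_trans ?_ le_sup_right)) le_sup_right
    rw [mul_comm]
    exact Ideal.mul_mono_right hmap
  obtain ⟨s, hs, y, hy, hsy⟩ := Submodule.mem_sup.1 (hsq hcf)
  obtain ⟨z, hz, rfl⟩ := Ideal.mem_span_singleton_mul.1 hy
  obtain ⟨hs0, hs1⟩ := mapC_divMod _ g hg s hs
  have hdeg : ∀ h : Q[X], (C c * (h %ₘ g)).degree < g.degree := fun h =>
    lt_of_le_of_lt (by rw [← smul_eq_C_mul]; exact degree_smul_le _ _) (degree_modByMonic_lt h hg)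
  obtain ⟨e1, e2⟩ := div_modByMonic_unique (f := C c * f) (g := g) (C c * (f /ₘ g))
    (C c * (f %ₘ g)) hg ⟨by rw [← mul_left_comm, ← mul_add, modByMonic_add_div], hdeg f⟩
  obtain ⟨e3, e4⟩ := div_modByMonic_unique (f := C c * f) (g := g) (s /ₘ g + z)
    (s %ₘ g) hg ⟨by rw [mul_add, ← add_assoc, modByMonic_add_div, hsy],
      degree_modByMonic_lt s hg⟩
  have hr : C c * (f %ₘ g) ∈ Ideal.map C (J ^ 2) := by rw [← e2, e4]; exact hs0
  have hq : C c * (f /ₘ g) ∈ J' := by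
    rw [← e1, e3]
    exact Ideal.add_mem _ (Ideal.pow_le_self two_ne_zero (hmap2 hs1)) hz
  have hq' : f /ₘ g ∈ J' := by
    rw [hmem, eval₂_mul, eval₂_C] at hq
    exact (hmem _).2 ((mul_eq_zero.1 hq).resolve_left hc)
  have hr' : f %ₘ g ∈ Ideal.map C (J ^ 2) := by
    rw [Ideal.mem_map_C_iff] at hr ⊢
    intro n
    refine hG _ (Ideal.mem_map_C_iff.1 (hmod f hf) n) ?_
    simpa using hr n
  rw [← modByMonic_add_div f g]
  refine Ideal.add_mem _ (hmap2 hr') ?_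
  rw [pow_two]
  exact Ideal.mul_mem_mul hgJ hq'

/-- no torsion in the conormal module -/
def GoodGen (R : Type*) {L : Type*} [CommRing R] [CommRing L] [Algebra R L] {σ : Type*}
    (w : σ → L) : Prop :=
  ∀ c : R, algebraMap R L c ≠ 0 →
    ∀ j ∈ RingHom.ker (MvPolynomial.aeval (R := R) w),
      MvPolynomial.C c * j ∈ RingHom.ker (MvPolynomial.aeval (R := R) w) ^ 2 →
      j ∈ RingHom.ker (MvPolynomial.aeval (R := R) w) ^ 2

open Polynomial in
lemma GoodGen.option {R L : Type*} [CommRing R] [CommRing L] [IsDomain L] [Algebra R L]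
    {σ : Type*} {w : σ → L} (hw : GoodGen R w) (a : L)
    (g : (MvPolynomial σ R)[X]) (hg : g.Monic)
    (hga : eval₂ (MvPolynomial.aeval (R := R) w : MvPolynomial σ R →ₐ[R] L).toRingHom a g = 0)
    (H : ∀ f : (MvPolynomial σ R)[X], f.degree < g.degree →
      eval₂ (MvPolynomial.aeval (R := R) w : MvPolynomial σ R →ₐ[R] L).toRingHom a f = 0 →
      ∀ i, MvPolynomial.aeval w (f.coeff i) = 0) :
    GoodGen R (fun o : Option σ => o.elim a w) := by
  intro c hc j hj hcj
  set φ := (MvPolynomial.aeval (R := R) w : MvPolynomial σ R →ₐ[R] L).toRingHom with hφ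
  let e := MvPolynomial.optionEquivLeft R σ
  have he : ∀ x, eval₂RingHom φ a (e x) =
      MvPolynomial.aeval (R := R) (fun o : Option σ => o.elim a w) x := by
    intro x
    have : (eval₂RingHom φ a).comp e.toRingEquiv.toRingHom =
      (MvPolynomial.aeval (R := R) (fun o : Option σ => o.elim a w)).toRingHom := by
      apply MvPolynomial.ringHom_ext
      · intro r; simp [e, hφ]
      · rintro (_ | i)
        · simp [e]
        · simp [e, hφ]
    exact DFunLike.congr_fun this x
  have hk : (RingHom.ker (eval₂RingHom φ a)).comap (e : _ →+* _) =
      RingHom.ker (MvPolynomial.aeval (R := R) (fun o : Option σ => o.elim a w)) := by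
    ext x
    rw [Ideal.mem_comap, RingHom.mem_ker, RingHom.mem_ker]
    exact (he x) ▸ Iff.rfl
  have hk2 : ∀ x, x ∈ RingHom.ker (MvPolynomial.aeval (R := R)
      (fun o : Option σ => o.elim a w)) ^ 2 ↔ e x ∈ RingHom.ker (eval₂RingHom φ a) ^ 2 := by
    intro x
    rw [← hk]
    have h2 := Ideal.map_symm (I := RingHom.ker (eval₂RingHom φ a)) e.toRingEquiv
    have h3 := Ideal.map_symm (I := RingHom.ker (eval₂RingHom φ a) ^ 2) e.toRingEquiv
    rw [Ideal.map_pow, h2] at h3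
    change x ∈ Ideal.comap e.toRingEquiv _ ^ 2 ↔ _
    rw [h3]; rfl
  rw [hk2] at hcj ⊢
  have hce : e (MvPolynomial.C c) = C (MvPolynomial.C c) := by
    simp [e]
  rw [map_mul, hce] at hcj
  refine poly_step φ (MvPolynomial.C c) (by simpa [hφ] using hc) ?_ g hg a hga ?_ (e j) ?_ hcj
  · exact hw c hc
  · exact H
  · rw [RingHom.mem_ker, he]; exact hj

section valstep
open Polynomial

/-- polynomials all of whose derivatives at `u` are bounded by `r δ^{-i}` -/
def WB {E L Γ : Type*} [Field E] [Field L] [Algebra E L] [LinearOrderedCommGroupWithZero Γ]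
    (v : Valuation L Γ) (u : L) (δ r : Γ) (z : E[X]) : Prop :=
  ∀ i : ℕ, v (aeval u (derivative^[i] z)) * δ ^ i ≤ r

variable {E L Γ : Type*} [Field E] [Field L] [Algebra E L] [LinearOrderedCommGroupWithZero Γ]
    {v : Valuation L Γ} {u : L} {δ : Γ}

lemma WB.zero' {r : Γ} {z : E[X]} (h : WB v u δ r z) : v (aeval u z) ≤ r := by
  simpa using h 0

lemma WB.deriv (hδ : δ ≠ 0) {r : Γ} {z : E[X]} (h : WB v u δ r z) :
    WB v u δ (r / δ) (derivative z) := by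
  intro i
  have := h (i + 1)
  rw [Function.iterate_succ_apply, pow_succ, ← mul_assoc] at this
  rwa [le_div_iff₀ (zero_lt_iff.2 hδ)]

lemma WB.add {r : Γ} {z w : E[X]} (h : WB v u δ r z) (h' : WB v u δ r w) :
    WB v u δ r (z + w) := by
  intro i
  rw [iterate_map_add, map_add]
  rcases le_total (v (aeval u (derivative^[i] z))) (v (aeval u (derivative^[i] w))) with h1 | h1
  · exact (mul_le_mul_left ((v.map_add _ _).trans (max_le h1 le_rfl)) _).trans (h' i)
  · exact (mul_le_mul_left ((v.map_add _ _).trans (max_le le_rfl h1)) _).trans (h i)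

lemma WB.natMul {r : Γ} {z : E[X]} (h : WB v u δ r z) (n : ℕ) :
    WB v u δ r ((n : E[X]) * z) := by
  induction n with
  | zero => intro i; simp
  | succ n ih => rw [Nat.cast_succ, add_mul, one_mul]; exact ih.add h

lemma WB.mul (hδ : δ ≠ 0) {r s : Γ} {z w : E[X]} (h : WB v u δ r z) (h' : WB v u δ s w) :
    WB v u δ (r * s) (z * w) := by
  intro i
  induction i generalizing r s z w with
  | zero => simpa using mul_le_mul' h.zero' h'.zero'
  | succ i ih =>
    rw [Function.iterate_succ_apply, derivative_mul, iterate_map_add, map_add]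
    have h1 := ih (h.deriv hδ) h'
    have h2 := ih h (h'.deriv hδ)
    have e1 : r / δ * s = r * s / δ := by rw [div_mul_eq_mul_div]
    have e2 : r * (s / δ) = r * s / δ := by rw [mul_div_assoc]
    rw [e1, le_div_iff₀ (zero_lt_iff.2 hδ), mul_assoc, ← pow_succ] at h1
    rw [e2, le_div_iff₀ (zero_lt_iff.2 hδ), mul_assoc, ← pow_succ] at h2
    rcases le_total (v (aeval u (derivative^[i] (derivative z * w))))
      (v (aeval u (derivative^[i] (z * derivative w)))) with h3 | h3
    · exact (mul_le_mul_left ((v.map_add _ _).trans (max_le h3 le_rfl)) _).trans h2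
    · exact (mul_le_mul_left ((v.map_add _ _).trans (max_le le_rfl h3)) _).trans h1

lemma WB.one : WB v u δ 1 (1 : E[X]) := by
  intro i
  cases i with
  | zero => simp
  | succ i => rw [Function.iterate_succ_apply]; simp

lemma WB.pow (hδ : δ ≠ 0) {r : Γ} {z : E[X]} (h : WB v u δ r z) (n : ℕ) :
    WB v u δ (r ^ n) (z ^ n) := by
  induction n with
  | zero => simpa using WB.one
  | succ n ih => rw [pow_succ, pow_succ]; exact ih.mul hδ h

lemma iterate_deriv_pow (p : ℕ) [Fact p.Prime] (hδ : δ ≠ 0) {x : E[X]} {η : Γ} (hη : η ≠ 0)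
    (hx : WB v u δ (η * δ) x) (hx' : WB v u δ η (derivative x)) (j : ℕ) :
    ∀ k, k + j < p → ∃ N : ℕ, ¬ p ∣ N ∧ ∃ t : E[X], WB v u δ (η ^ j / (η * δ)) t ∧
      derivative^[j] (x ^ (k + j)) = x ^ k * (N * derivative x ^ j + x * t) := by
  have hp : p.Prime := Fact.out
  induction j with
  | zero =>
    intro k hk
    refine ⟨1, by simpa using hp.one_lt.ne', 0, ?_, by simp⟩
    intro i; simp
  | succ j ih =>
    intro k hk
    obtain ⟨N, hN, t, ht, e⟩ := ih (k + 1) (by omega)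
    refine ⟨(k + 1) * N, ?_, ((k + 1 : ℕ) : E[X]) * (derivative x * t)
      + ((N : ℕ) : E[X]) * derivative (derivative x ^ j) + derivative x * t + x * derivative t,
      ?_, ?_⟩
    · rw [hp.dvd_mul]
      rintro (h | h)
      · exact absurd (Nat.le_of_dvd (by omega) h) (by omega)
      · exact hN h
    · have a1 : WB v u δ (η ^ (j + 1) / (η * δ)) (derivative x * t) := by
        have := hx'.mul hδ ht
        rwa [← mul_div_assoc, ← pow_succ'] at this
      have a2 : WB v u δ (η ^ (j + 1) / (η * δ)) (derivative (derivative x ^ j)) := by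
        have := (hx'.pow hδ j).deriv hδ
        have e : η ^ (j + 1) / (η * δ) = η ^ j / δ := by field_simp; rw [pow_succ']
        rwa [e]
      have a3 : WB v u δ (η ^ (j + 1) / (η * δ)) (x * derivative t) := by
        have := hx.mul hδ (ht.deriv hδ)
        have e : η ^ (j + 1) / (η * δ) = η * δ * (η ^ j / (η * δ) / δ) := by field_simp; rw [pow_succ']
        rwa [e]
      exact (((a1.natMul _).add (a2.natMul _)).add a1).add a3
    · rw [show k + (j + 1) = k + 1 + j by ring, Function.iterate_succ_apply', e]
      simp only [derivative_mul, derivative_add, derivative_natCast, derivative_pow,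
        Nat.cast_mul, Nat.add_sub_cancel, map_natCast]
      push_cast
      ring

variable (p : ℕ) [Fact p.Prime] [CharP E p]

lemma iterate_deriv_p (z : E[X]) : derivative^[p] z = 0 := by
  rw [← Polynomial.factorial_smul_hasseDeriv]
  have : ((p.factorial : ℕ) : E[X]) = 0 := by
    rw [CharP.cast_eq_zero_iff E[X] p]
    exact Nat.dvd_factorial (Fact.out : p.Prime).pos le_rfl
  simp [Pi.smul_apply, ← Nat.cast_smul_eq_nsmul E[X], this]

lemma aeval_of_deriv_zero (hu : u ^ p ∈ (algebraMap E L).range) (a : E[X])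
    (ha : derivative a = 0) : ∃ b : E, aeval u a = algebraMap E L b := by
  obtain ⟨e, he⟩ := hu
  have h1 := Polynomial.expand_contract p ha (Fact.out : p.Prime).ne_zero
  refine ⟨(contract p a).eval e, ?_⟩
  conv_lhs => rw [← h1]
  rw [expand_aeval, ← he, aeval_algebraMap_apply_eq_algebraMap_eval]

lemma val_natCast_eq_one [CharP L p] (v : Valuation L Γ) {N : ℕ} (hN : ¬ p ∣ N) : v (N : L) = 1 := by
  have hp : p.Prime := Fact.out
  have : ((N : ZMod p)) ≠ 0 := by rwa [Ne, ZMod.natCast_eq_zero_iff]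
  have h2 := ZMod.pow_card_sub_one_eq_one this
  have h3 := congrArg (ZMod.castHom (dvd_refl p) L) h2
  rw [map_pow, map_natCast, map_one] at h3
  have h4 := congrArg v h3
  rw [map_pow, map_one] at h4
  exact (pow_eq_one_iff.1 h4).resolve_right (by have := hp.two_le; omega)

lemma val_core [CharP L p] (hu : u ^ p ∈ (algebraMap E L).range) (hδ : δ ≠ 0) (x : E[X])
    (h0 : v (aeval u x) < v (aeval u (derivative x)) * δ)
    (h1 : ∀ i, v (aeval u (derivative^[i + 1] (derivative x))) * δ ≤
      v (aeval u (derivative^[i] (derivative x)))) :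
    ∃ b : E, v (aeval u (derivative x)) * v (u - algebraMap E L b) ≤ v (aeval u x) := by
  have hp : p.Prime := Fact.out
  set η := v (aeval u (derivative x)) with hη
  have hη0 : η ≠ 0 := by
    intro h
    rw [h, zero_mul] at h0
    exact absurd h0 (not_lt.2 zero_le)
  have hx' : WB v u δ η (derivative x) := by
    intro i
    induction i with
    | zero => simp [hη]
    | succ i ih =>
      refine le_trans ?_ ih
      rw [pow_succ', ← mul_assoc]
      exact mul_le_mul_left (h1 i) _
  have hx : WB v u δ (η * δ) x := by
    intro i
    cases i with
    | zero => simpa using h0.le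
    | succ i =>
      rw [Function.iterate_succ_apply, pow_succ, ← mul_assoc]
      exact mul_le_mul_left (hx' i) _
  obtain ⟨N, hN, t, ht, e⟩ := iterate_deriv_pow p hδ hη0 hx hx' (p - 2) 1
    (by have := hp.two_le; omega)
  obtain ⟨N', hN', t', ht', e'⟩ := iterate_deriv_pow p hδ hη0 hx hx' (p - 1) 0
    (by have := hp.two_le; omega)
  have hp2 : 1 + (p - 2) = p - 1 := by have := hp.two_le; omega
  have hp3 : p - 1 = (p - 2) + 1 := by have := hp.two_le; omega
  rw [hp2] at e
  rw [zero_add, pow_zero, one_mul] at e'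
  set z := derivative^[p - 2] (x ^ (p - 1)) with hz
  have hza : derivative z = derivative^[p - 1] (x ^ (p - 1)) := by
    conv_rhs => rw [hp3]
    rw [Function.iterate_succ_apply', ← hp3]
  set a := derivative^[p - 1] (x ^ (p - 1)) with ha
  have ha0 : derivative a = 0 := by
    rw [ha, ← Function.iterate_succ_apply' (f := derivative), Nat.succ_eq_add_one,
      show p - 1 + 1 = p by have := hp.two_le; omega, iterate_deriv_p]
  obtain ⟨α, hα⟩ := aeval_of_deriv_zero p hu a ha0
  obtain ⟨β, hβ⟩ := aeval_of_deriv_zero p hu (z - a * X) (by simp [hza, ha0])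
  -- valuation of a
  have hxt : ∀ (j : ℕ) (t : E[X]), WB v u δ (η ^ j / (η * δ)) t → v (aeval u (x * t)) < η ^ j := by
    intro j t ht
    rw [map_mul, map_mul]
    refine lt_of_le_of_lt (mul_le_mul_right ht.zero' _) ?_
    rw [← mul_div_assoc, div_lt_iff₀ (zero_lt_iff.2 (mul_ne_zero hη0 hδ)), mul_comm]
    exact mul_lt_mul_of_pos_left h0 (zero_lt_iff.2 (pow_ne_zero _ hη0))
  have hNv : ∀ (j N : ℕ), ¬ p ∣ N → v (aeval u ((N : E[X]) * derivative x ^ j)) = η ^ j := by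
    intro j N hN
    rw [map_mul, map_mul, map_natCast, val_natCast_eq_one p v hN, one_mul, map_pow, map_pow]
  have hva : v (algebraMap E L α) = η ^ (p - 1) := by
    rw [← hα, e', map_add, v.map_add_eq_of_lt_left, hNv _ _ hN']
    rw [hNv _ _ hN']
    exact hxt _ _ ht'
  have hvz : v (aeval u z) ≤ v (aeval u x) * η ^ (p - 2) := by
    rw [e, pow_one, map_mul, map_mul]
    refine mul_le_mul_right ?_ _
    rw [map_add]
    refine (v.map_add _ _).trans (max_le (hNv _ _ hN).le (hxt _ _ ht).le)
  have hα0 : algebraMap E L α ≠ 0 := by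
    intro h
    rw [h, map_zero] at hva
    exact pow_ne_zero _ hη0 hva.symm
  refine ⟨-β / α, ?_⟩
  have e5 : algebraMap E L α * (u - algebraMap E L (-β / α)) = aeval u z := by
    rw [map_div₀, map_neg, ← hβ, map_sub, map_mul, hα, aeval_X]
    field_simp
    ring
  have e6 : η ^ (p - 2) * (η * v (u - algebraMap E L (-β / α))) ≤ η ^ (p - 2) * v (aeval u x) := by
    rw [← mul_assoc, ← pow_succ, ← hp3, ← hva, ← map_mul, e5, mul_comm]
    exact hvz
  exact le_of_mul_le_mul_left e6 (zero_lt_iff.2 (pow_ne_zero _ hη0))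

/-- the key estimate -/
lemma val_key [CharP L p] (hu : u ^ p ∈ (algebraMap E L).range) (v : Valuation L Γ) (n : ℕ) :
    ∀ h : E[X], derivative^[n] h = 0 → ∃ b : E, ∀ i,
      v (aeval u (derivative^[i + 1] h)) * v (u - algebraMap E L b) ≤
        v (aeval u (derivative^[i] h)) := by
  induction n with
  | zero =>
    intro h hh
    simp only [Function.iterate_zero, id_eq] at hh
    exact ⟨0, fun i => by simp [hh]⟩
  | succ n ih =>
    intro h hh
    obtain ⟨b0, hb0⟩ := ih (derivative h) hh
    by_cases hc : v (aeval u (derivative h)) * v (u - algebraMap E L b0) ≤ v (aeval u h)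
    · refine ⟨b0, fun i => ?_⟩
      cases i with
      | zero => simpa using hc
      | succ i => exact hb0 i
    · push Not at hc
      have hδ : v (u - algebraMap E L b0) ≠ 0 := by
        intro h0
        rw [h0, mul_zero] at hc
        exact absurd hc (not_lt.2 zero_le)
      obtain ⟨b, hb⟩ := val_core p hu hδ h hc hb0
      have hlt := lt_of_mul_lt_mul_left' (hb.trans_lt hc)
      refine ⟨b, fun i => ?_⟩
      cases i with
      | zero => simpa using hb
      | succ i => exact (mul_le_mul_right hlt.le _).trans (hb0 i)

end valstep

section onestep
open Polynomial

lemma WB.coeff_le {E L Γ : Type*} [Field E] [Field L] [Algebra E L]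
    [LinearOrderedCommGroupWithZero Γ] (p : ℕ) [Fact p.Prime] [CharP L p]
    {v : Valuation L Γ} {t : L} (ht : v t ≠ 0) (n : ℕ) :
    n < p → ∀ (r : Γ) (g : E[X]), g.natDegree ≤ n → WB v t (v t) r g →
      ∀ k, v (algebraMap E L (g.coeff k)) * v t ^ k ≤ r := by
  induction n with
  | zero =>
    intro _ r g hg hW k
    rcases k with _ | k
    · have := hW.zero'
      rw [Polynomial.eq_C_of_natDegree_le_zero hg, aeval_C] at this
      simpa using this
    · rw [coeff_eq_zero_of_natDegree_lt (by omega)]; simp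
  | succ n ih =>
    intro hn r g hg hW
    have hd := ih (by omega) (r / v t) (derivative g)
      ((natDegree_derivative_le g).trans (by omega)) (hW.deriv ht)
    have hs : ∀ k, v (algebraMap E L (g.coeff (k + 1))) * v t ^ (k + 1) ≤ r := by
      intro k
      by_cases hk : k + 1 ≤ n + 1
      · have := hd k
        rw [coeff_derivative, map_mul, map_mul, ← Nat.cast_succ, map_natCast,
          val_natCast_eq_one p v (fun h => absurd (Nat.le_of_dvd (by omega) h) (by omega)), mul_one,
          le_div_iff₀ (zero_lt_iff.2 ht), mul_assoc, ← pow_succ] at this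
        exact this
      · rw [coeff_eq_zero_of_natDegree_lt (by omega)]; simp
    intro k
    rcases k with _ | k
    · have h1 := hW.zero'
      rw [aeval_eq_sum_range, Finset.sum_range_succ'] at h1
      simp only [pow_zero, Algebra.smul_def, mul_one] at h1
      have h2 : v (∑ i ∈ Finset.range g.natDegree,
          algebraMap E L (g.coeff (i + 1)) * t ^ (i + 1)) ≤ r := by
        refine v.map_sum_le fun i _ => ?_
        rw [map_mul, map_pow]; exact hs i
      have h3 := (v.map_sub _ _).trans (max_le h1 h2)
      rw [add_sub_cancel_left] at h3
      simpa using h3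
    · exact hs k

lemma taylor_aeval' {E L : Type*} [Field E] [Field L] [Algebra E L] (b : E) (h : E[X]) (u : L) :
    aeval (u - algebraMap E L b) (taylor b h) = aeval u h := by
  rw [taylor_apply, aeval_comp]; simp

lemma taylor_deriv_iter {E : Type*} [Field E] (b : E) (h : E[X]) (i : ℕ) :
    derivative^[i] (taylor b h) = taylor b (derivative^[i] h) := by
  induction i with
  | zero => rfl
  | succ i ih =>
    rw [Function.iterate_succ_apply', ih, Function.iterate_succ_apply', taylor_apply, taylor_apply,
      derivative_comp]
    simp

lemma exists_common {E L Γ : Type*} [Field E] [Field L] [Algebra E L]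
    [LinearOrderedCommGroupWithZero Γ] (p : ℕ) [Fact p.Prime] [CharP L p] [CharP E p]
    (v : Valuation L Γ) {u : L} (hu : u ^ p ∈ (algebraMap E L).range)
    (hu' : u ∉ (algebraMap E L).range) (S : Finset E[X])
    (hS : ∀ h ∈ S, v (aeval u h) ≤ 1) :
    ∃ b : E, ∀ h ∈ S, ∃ g : E[X], g.natDegree < p ∧ aeval (u - algebraMap E L b) g = aeval u h ∧
      ∀ k, v (algebraMap E L (g.coeff k)) * v (u - algebraMap E L b) ^ k ≤ 1 := by
  classical
  have hp : p.Prime := Fact.out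
  obtain ⟨e, he⟩ := hu
  have hm : (X ^ p - C e : E[X]).Monic := monic_X_pow_sub_C _ hp.ne_zero
  have hpos : ∀ b : E, v (u - algebraMap E L b) ≠ 0 := by
    intro b h
    rw [v.zero_iff, sub_eq_zero] at h
    exact hu' ⟨b, h.symm⟩
  choose B hB using fun h : E[X] => val_key p ⟨e, he⟩ v p (h %ₘ (X ^ p - C e)) (iterate_deriv_p p _)
  have : ∃ b : E, ∀ h ∈ S, v (u - algebraMap E L b) ≤ v (u - algebraMap E L (B h)) := by
    rcases S.eq_empty_or_nonempty with rfl | hne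
    · exact ⟨0, by simp⟩
    · obtain ⟨h, hh, hmin⟩ := S.exists_min_image (fun h => v (u - algebraMap E L (B h))) hne
      exact ⟨B h, hmin⟩
  obtain ⟨b, hb⟩ := this
  refine ⟨b, fun h hh => ?_⟩
  have hev : aeval u (h %ₘ (X ^ p - C e)) = aeval u h := by
    conv_rhs => rw [← modByMonic_add_div h (X ^ p - C e)]
    simp [← he]
  have hdeg : (h %ₘ (X ^ p - C e)).natDegree < p := by
    have := natDegree_modByMonic_lt h hm (by
      intro h1
      have := congrArg natDegree h1
      rw [natDegree_X_pow_sub_C, natDegree_one] at this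
      exact hp.ne_zero this)
    rwa [natDegree_X_pow_sub_C] at this
  refine ⟨taylor b (h %ₘ (X ^ p - C e)), by rwa [natDegree_taylor], ?_, ?_⟩
  · rw [taylor_aeval', hev]
  · refine WB.coeff_le p (hpos b) (p - 1) (by have := hp.pos; omega) 1 _
      (by rw [natDegree_taylor]; omega) ?_
    intro i
    rw [taylor_deriv_iter, taylor_aeval']
    induction i with
    | zero => simpa [hev] using hS h hh
    | succ i ih =>
      refine le_trans ?_ ih
      rw [pow_succ', ← mul_assoc]
      exact mul_le_mul_left ((mul_le_mul_right (hb h hh) _).trans (hB h i)) _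
end onestep

section monomial

/-- real value -/
def rv {L : Type*} [Field L] (v : AddValuation L (WithTop ℝ)) (x : L) : ℝ := (v x).untopD 0

variable {L : Type*} [Field L] {v : AddValuation L (WithTop ℝ)}

lemma rv_spec {x : L} (hx : x ≠ 0) : v x = ((rv v x : ℝ) : WithTop ℝ) := by
  unfold rv
  have : v x ≠ ⊤ := by rwa [Ne, v.top_iff]
  obtain ⟨r, hr⟩ := WithTop.ne_top_iff_exists.1 this
  rw [← hr]; rfl

lemma rv_nonneg {x : L} (hx : x ≠ 0) : 0 ≤ v x ↔ 0 ≤ rv v x := by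
  rw [rv_spec hx]; exact WithTop.coe_nonneg

lemma rv_mul {x y : L} (hx : x ≠ 0) (hy : y ≠ 0) : rv v (x * y) = rv v x + rv v y := by
  have := v.map_mul x y
  rw [rv_spec hx, rv_spec hy, rv_spec (mul_ne_zero hx hy)] at this
  exact_mod_cast this

lemma rv_one : rv v 1 = 0 := by
  simp [rv]

lemma rv_inv {x : L} (hx : x ≠ 0) : rv v x⁻¹ = - rv v x := by
  have := rv_mul (v := v) hx (inv_ne_zero hx)
  rw [mul_inv_cancel₀ hx, rv_one] at this
  linarith

lemma rv_pow {x : L} (hx : x ≠ 0) (n : ℕ) : rv v (x ^ n) = n * rv v x := by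
  induction n with
  | zero => simp [rv_one]
  | succ n ih => rw [pow_succ, rv_mul (pow_ne_zero _ hx) hx, ih]; push_cast; ring

lemma rv_zpow {x : L} (hx : x ≠ 0) (n : ℤ) : rv v (x ^ n) = n * rv v x := by
  cases n with
  | ofNat n => simp [rv_pow hx]
  | negSucc n => rw [zpow_negSucc, rv_inv (pow_ne_zero _ hx), rv_pow hx]; push_cast; ring

/-- value group -/
def valGrp (E : Type*) [Field E] [Algebra E L] (v : AddValuation L (WithTop ℝ)) :
    AddSubgroup ℝ where
  carrier := {r | ∃ c : E, c ≠ 0 ∧ rv v (algebraMap E L c) = r}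
  zero_mem' := ⟨1, one_ne_zero, by rw [map_one, rv_one]⟩
  add_mem' := by
    rintro _ _ ⟨c, hc, rfl⟩ ⟨d, hd, rfl⟩
    exact ⟨c * d, mul_ne_zero hc hd, by rw [map_mul, rv_mul (by simpa) (by simpa)]⟩
  neg_mem' := by
    rintro _ ⟨c, hc, rfl⟩
    exact ⟨c⁻¹, inv_ne_zero hc, by rw [map_inv₀, rv_inv (by simpa)]⟩

lemma mem_valGrp {E : Type*} [Field E] [Algebra E L] {r : ℝ} :
    r ∈ valGrp E v ↔ ∃ c : E, c ≠ 0 ∧ rv v (algebraMap E L c) = r := Iff.rfl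

lemma mem_of_coprime (G : AddSubgroup ℝ) (p : ℕ) (s : ℤ) (hs : IsCoprime s (p : ℤ)) {δ : ℝ}
    (h1 : (s : ℝ) * δ ∈ G) (h2 : (p : ℝ) * δ ∈ G) : δ ∈ G := by
  obtain ⟨i, j, hij⟩ := hs
  have h3 := G.add_mem (G.zsmul_mem h1 i) (G.zsmul_mem h2 j)
  have h4 : (i : ℝ) * s + j * p = 1 := by exact_mod_cast hij
  have : i • ((s : ℝ) * δ) + j • ((p : ℝ) * δ) = δ := by
    rw [zsmul_eq_mul, zsmul_eq_mul, ← mul_assoc, ← mul_assoc, ← add_mul, h4, one_mul]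
  rwa [this] at h3

lemma isCoprime_of_not_dvd {p : ℕ} (hp : p.Prime) {s : ℤ} (h : ¬ (p : ℤ) ∣ s) :
    IsCoprime s (p : ℤ) :=
  ((Nat.prime_iff_prime_int.1 hp).coprime_iff_not_dvd.2 h).symm

lemma exists_monomial_gen {E : Type*} [Field E] [Algebra E L] (p : ℕ) [hp : Fact p.Prime]
    {t : L} (ht : t ^ p ∈ (algebraMap E L).range) (ht' : t ∉ (algebraMap E L).range)
    (T : Finset (E × ℕ)) (hT : ∀ x ∈ T, x.2 < p ∧ 0 ≤ v (algebraMap E L x.1 * t ^ x.2)) :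
    ∃ w : L, w ∉ (algebraMap E L).range ∧ 0 ≤ v w ∧ (∃ (c : E) (i : ℤ), w = algebraMap E L c * t ^ i)
      ∧ ∀ x ∈ T, ∃ (e : E) (N : ℕ), 0 ≤ v (algebraMap E L e) ∧
        algebraMap E L x.1 * t ^ x.2 = algebraMap E L e * w ^ N := by
  have ht0 : t ≠ 0 := by rintro rfl; exact ht' ⟨0, map_zero _⟩
  obtain ⟨q, hq⟩ := ht
  have hq0 : q ≠ 0 := by rintro rfl; rw [map_zero] at hq; exact pow_ne_zero _ ht0 hq.symm
  set δ := rv v t with hδ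
  set G := valGrp E v with hG
  have hpδ : (p : ℝ) * δ ∈ G := ⟨q, hq0, by rw [hq, rv_pow ht0]⟩
  have hinj : ∀ {c : E}, c ≠ 0 → algebraMap E L c ≠ 0 := fun hc => by simpa
  -- the case w = t / c
  have main : ∀ c : E, c ≠ 0 → rv v (algebraMap E L c) ≤ δ →
      (∀ x ∈ T, x.1 ≠ 0 → 0 ≤ rv v (algebraMap E L x.1) + x.2 * rv v (algebraMap E L c)) →
      ∃ w : L, w ∉ (algebraMap E L).range ∧ 0 ≤ v w ∧
        (∃ (c : E) (i : ℤ), w = algebraMap E L c * t ^ i)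
      ∧ ∀ x ∈ T, ∃ (e : E) (N : ℕ), 0 ≤ v (algebraMap E L e) ∧
        algebraMap E L x.1 * t ^ x.2 = algebraMap E L e * w ^ N := by
    intro c hc hle H
    have hc' := hinj hc
    refine ⟨algebraMap E L c⁻¹ * t, ?_, ?_, ⟨c⁻¹, 1, by simp⟩, ?_⟩
    · rintro ⟨d, hd⟩
      refine ht' ⟨c * d, ?_⟩
      rw [map_mul, hd, map_inv₀]; field_simp
    · rw [rv_nonneg (mul_ne_zero (hinj (inv_ne_zero hc)) ht0),
        rv_mul (hinj (inv_ne_zero hc)) ht0, map_inv₀, rv_inv hc']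
      linarith
    · rintro ⟨a, k⟩ hx
      refine ⟨a * c ^ k, k, ?_, ?_⟩
      · by_cases ha : a = 0
        · subst ha; simp
        · rw [rv_nonneg (hinj (mul_ne_zero ha (pow_ne_zero _ hc))), map_mul, map_pow,
            rv_mul (hinj ha) (pow_ne_zero _ hc'), rv_pow hc']
          exact H _ hx ha
      · simp only [map_mul, map_pow, map_inv₀, mul_pow, inv_pow]
        field_simp
  have hT' : ∀ x ∈ T, x.1 ≠ 0 → 0 ≤ rv v (algebraMap E L x.1) + x.2 * δ := by
    intro x hx h0
    have := (hT x hx).2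
    rwa [rv_nonneg (mul_ne_zero (hinj h0) (pow_ne_zero _ ht0)),
      rv_mul (hinj h0) (pow_ne_zero _ ht0), rv_pow ht0] at this
  by_cases hδG : δ ∈ G
  · obtain ⟨c, hc, hcδ⟩ := hδG
    exact main c hc hcδ.le (by rw [hcδ]; exact hT')
  rcases G.dense_or_cyclic with hd | ⟨η, hη⟩
  · have hev : ∀ᶠ γ in nhdsWithin δ (Set.Iio δ), ∀ x ∈ T,
        x.1 ≠ 0 → 0 ≤ rv v (algebraMap E L x.1) + x.2 * γ := by
      rw [Filter.eventually_all_finset]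
      rintro ⟨a, k⟩ hx
      by_cases ha : a = 0
      · exact Filter.Eventually.of_forall fun _ h => absurd ha h
      rcases Nat.eq_zero_or_pos k with rfl | hk
      · refine Filter.Eventually.of_forall fun _ h => ?_
        have := hT' _ hx h
        simpa using this
      · have hlt : 0 < rv v (algebraMap E L a) + k * δ := by
          refine lt_of_le_of_ne (hT' _ hx ha) fun h => hδG ?_
          refine mem_of_coprime G p k (isCoprime_of_not_dvd hp.out ?_) ?_ hpδ
          · intro h
            exact absurd (Nat.le_of_dvd hk (by exact_mod_cast h)) (not_le.2 (hT _ hx).1)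
          · have : ((k : ℤ) : ℝ) * δ = - rv v (algebraMap E L a) := by push_cast; linarith
            rw [this]
            exact G.neg_mem ⟨a, ha, rfl⟩
        have hc : Continuous fun γ : ℝ => rv v (algebraMap E L a) + k * γ := by fun_prop
        have := (hc.tendsto δ).eventually (lt_mem_nhds hlt)
        exact (this.filter_mono nhdsWithin_le_nhds).mono fun _ h _ => h.le
    obtain ⟨l, hl, hsub⟩ := (mem_nhdsLT_iff_exists_Ioo_subset).1 hev
    obtain ⟨γ, ⟨c, hc, hcγ⟩, h1, h2⟩ := hd.exists_between (Set.mem_Iio.1 hl)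
    subst hcγ
    exact main c hc h2.le (hsub ⟨h1, h2⟩)
  · obtain ⟨η, hη0, hη⟩ : ∃ η : ℝ, 0 ≤ η ∧ G = AddSubgroup.zmultiples η := by
      rw [← AddSubgroup.zmultiples_eq_closure] at hη
      refine ⟨|η|, abs_nonneg _, ?_⟩
      rw [hη]
      rcases abs_choice η with h | h <;> rw [h]
      simp
    have hGm : ∀ r, r ∈ G ↔ ∃ m : ℤ, m * η = r := by
      intro r; rw [hη, AddSubgroup.mem_zmultiples_iff]; simp
    have hp0 : (p : ℝ) ≠ 0 := by exact_mod_cast hp.out.ne_zero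
    obtain ⟨s, hs⟩ := (hGm _).1 hpδ
    have hηpos : 0 < η := by
      refine lt_of_le_of_ne hη0 fun h => hδG ?_
      rw [← h, mul_zero] at hs
      rw [(mul_eq_zero.1 hs.symm).resolve_left hp0]
      exact G.zero_mem
    have hsp : ¬ (p : ℤ) ∣ s := by
      rintro ⟨m, rfl⟩
      refine hδG ((hGm _).2 ⟨m, ?_⟩)
      push_cast at hs
      rw [mul_assoc] at hs
      exact mul_left_cancel₀ hp0 hs
    obtain ⟨i, j, hij⟩ := isCoprime_of_not_dvd hp.out hsp
    have hij' : (i : ℝ) * s + j * p = 1 := by exact_mod_cast hij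
    obtain ⟨c, hc, hcη⟩ : η ∈ G := (hGm _).2 ⟨1, by simp⟩
    have hc' := hinj hc
    have hcj : c ^ j ≠ 0 := zpow_ne_zero _ hc
    set w := algebraMap E L (c ^ j) * t ^ i with hw
    have hw0 : w ≠ 0 := mul_ne_zero (hinj hcj) (zpow_ne_zero _ ht0)
    have hwv : (p : ℝ) * rv v w = η := by
      rw [hw, rv_mul (hinj hcj) (zpow_ne_zero _ ht0), map_zpow₀, rv_zpow hc', rv_zpow ht0, hcη,
        ← hδ]
      linear_combination (i : ℝ) * (-hs) + η * hij'
    refine ⟨w, ?_, ?_, ⟨_, _, rfl⟩, ?_⟩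
    · rintro ⟨d, hd⟩
      have hd0 : d ≠ 0 := by rintro rfl; exact hw0 (by rw [← hd, map_zero])
      obtain ⟨m, hm⟩ := (hGm (rv v w)).1 ⟨d, hd0, by rw [hd]⟩
      rw [← hm, ← mul_assoc] at hwv
      have : (p : ℝ) * m = 1 := mul_right_cancel₀ hηpos.ne' (by rw [hwv, one_mul])
      have h2 : (p : ℤ) * m = 1 := by exact_mod_cast this
      have := Int.natCast_dvd_natCast.1 (show (p : ℤ) ∣ (1 : ℕ) from ⟨m, by rw [h2]; rfl⟩)
      exact hp.out.one_lt.ne' (Nat.dvd_one.1 this)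
    · rw [rv_nonneg hw0]
      have : (0:ℝ) < p := by exact_mod_cast hp.out.pos
      by_contra hcon
      push Not at hcon
      nlinarith
    · rintro ⟨a, k⟩ hx
      by_cases ha : a = 0
      · exact ⟨0, 0, by simp, by simp [ha]⟩
      have ha' := hinj ha
      obtain ⟨m, hm⟩ := (hGm (rv v (algebraMap E L a))).1 ⟨a, ha, rfl⟩
      have hnn : 0 ≤ m * p + k * s := by
        have h1 := hT' _ hx ha
        simp only [← hm] at h1
        have h2 : 0 ≤ ((m * p + k * s : ℤ) : ℝ) * η := by
          have : (0:ℝ) < p := by exact_mod_cast hp.out.pos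
          have : ((m * p + k * s : ℤ) : ℝ) * η = p * (m * η + k * δ) := by
            push_cast; linear_combination (k : ℝ) * hs
          rw [this]; positivity
        have h3 := nonneg_of_mul_nonneg_left h2 hηpos
        exact_mod_cast h3
      obtain ⟨N, hN⟩ := Int.eq_ofNat_of_zero_le hnn
      have hN' : (m : ℝ) * p + k * s = N := by exact_mod_cast hN
      have key : algebraMap E L a * t ^ k =
          algebraMap E L (a * q ^ (k * j - i * m) * c ^ (-(j * N))) * w ^ N := by
        have e1 : (k : ℤ) = p * (k * j - i * m) + i * N := by
          rw [← hN]; linear_combination (k : ℤ) * (-hij)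
        rw [hw, map_mul, map_mul, map_zpow₀, map_zpow₀, map_zpow₀, hq, mul_pow,
          ← zpow_natCast (t ^ i), ← zpow_mul, ← zpow_natCast (_ ^ j), ← zpow_mul,
          ← zpow_natCast t p, ← zpow_mul, zpow_neg, ← zpow_natCast t k]
        conv_lhs => rw [e1]
        rw [zpow_add₀ ht0]
        have := zpow_ne_zero (j * N) hc'
        field_simp
      refine ⟨_, N, ?_, key⟩
      have he0 : a * q ^ (k * j - i * m) * c ^ (-(j * N)) ≠ 0 :=
        mul_ne_zero (mul_ne_zero ha (zpow_ne_zero _ hq0)) (zpow_ne_zero _ hc)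
      rw [rv_nonneg (hinj he0)]
      have h5 := congrArg (rv v) key
      rw [rv_mul ha' (pow_ne_zero _ ht0), rv_mul (hinj he0) (pow_ne_zero _ hw0), rv_pow ht0,
        rv_pow hw0, ← hm] at h5
      have : (p : ℝ) * rv v (algebraMap E L (a * q ^ (k * j - i * m) * c ^ (-(j * N)))) = 0 := by
        linear_combination (-(p : ℝ)) * h5 + (-(N : ℝ)) * hwv + η * hN' - k * hs
      rw [(mul_eq_zero.1 this).resolve_left hp0]

open Polynomial in
lemma one_step {E : Type*} [Field E] [Algebra E L] (p : ℕ) [hp : Fact p.Prime]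
    [CharP L p] [CharP E p]
    {u : L} (hu : u ^ p ∈ (algebraMap E L).range) (hu' : u ∉ (algebraMap E L).range)
    (S : Finset E[X]) (hS : ∀ h ∈ S, 0 ≤ v (aeval u h)) :
    ∃ w : L, w ∉ (algebraMap E L).range ∧ 0 ≤ v w ∧
      (∃ (b c : E) (i : ℤ), w = algebraMap E L c * (u - algebraMap E L b) ^ i) ∧
      ∀ h ∈ S, ∃ P : E[X], (∀ k, 0 ≤ v (algebraMap E L (P.coeff k))) ∧
        aeval w P = aeval u h := by
  classical
  have hle : ∀ x : L, AddValuation.toValuation v x ≤ 1 ↔ 0 ≤ v x := fun x => Iff.rfl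
  obtain ⟨b, hb⟩ := exists_common p (AddValuation.toValuation v) hu hu' S
    (fun h hh => (hle _).2 (hS h hh))
  choose! g hg1 hg2 hg3 using hb
  have hbp : (u - algebraMap E L b) ^ p ∈ (algebraMap E L).range := by
    obtain ⟨e, he⟩ := hu
    refine ⟨e - b ^ p, ?_⟩
    rw [sub_pow_char, map_sub, he, map_pow]
  have hbn : (u - algebraMap E L b) ∉ (algebraMap E L).range := by
    rintro ⟨d, hd⟩
    exact hu' ⟨d + b, by rw [map_add, hd]; ring⟩
  obtain ⟨w, hw1, hw2, ⟨c, i, hw3⟩, hw4⟩ := exists_monomial_gen (v := v) p hbp hbn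
    (S.biUnion fun h => (Finset.range p).image fun k => ((g h).coeff k, k)) (by
      intro x hx
      simp only [Finset.mem_biUnion, Finset.mem_image, Finset.mem_range] at hx
      obtain ⟨h, hh, k, hk, rfl⟩ := hx
      refine ⟨hk, ?_⟩
      rw [← hle, map_mul, map_pow]
      exact hg3 h hh k)
  refine ⟨w, hw1, hw2, ⟨b, c, i, hw3⟩, fun h hh => ?_⟩
  have : ∀ k, k ∈ Finset.range p → ∃ (e : E) (N : ℕ), 0 ≤ v (algebraMap E L e) ∧
      algebraMap E L ((g h).coeff k) * (u - algebraMap E L b) ^ k = algebraMap E L e * w ^ N := by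
    intro k hk
    exact hw4 ((g h).coeff k, k) (by
      simp only [Finset.mem_biUnion, Finset.mem_image]
      exact ⟨h, hh, k, hk, rfl⟩)
  choose! e N he1 he2 using this
  refine ⟨∑ k ∈ Finset.range p, monomial (N k) (e k), ?_, ?_⟩
  · intro k
    rw [finsetSum_coeff, map_sum]
    refine v.map_le_sum fun i hi => ?_
    rw [coeff_monomial]
    split_ifs
    · exact he1 i hi
    · simp
  · rw [map_sum, ← hg2 h hh, aeval_eq_sum_range' (hg1 h hh)]
    refine Finset.sum_congr rfl fun k hk => ?_
    rw [aeval_monomial, ← he2 k hk, Algebra.smul_def]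
end monomial

section tower
open Polynomial

lemma GoodGen.redundant {R L : Type*} [CommRing R] [Field L] [Algebra R L]
    {σ : Type} {w : σ → L} (hw : GoodGen R w) (S : Finset L)
    (hS : ∀ s ∈ S, s ∈ (MvPolynomial.aeval (R := R) w).range) :
    ∃ (τ : Type) (w' : τ → L), GoodGen R w' ∧ Set.range w' = Set.range w ∪ S := by
  classical
  induction S using Finset.induction_on with
  | empty => exact ⟨σ, w, hw, by simp⟩
  | insert a S ha ih =>
    obtain ⟨τ, w', h1, h2⟩ := ih fun s hs => hS s (Finset.mem_insert_of_mem hs)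
    have h3 : a ∈ (MvPolynomial.aeval (R := R) w').range := by
      have h4 := hS a (Finset.mem_insert_self _ _)
      rw [← Algebra.adjoin_range_eq_range_aeval] at h4 ⊢
      exact Algebra.adjoin_mono (h2 ▸ Set.subset_union_left) h4
    obtain ⟨q, hq⟩ := h3
    refine ⟨Option τ, _, h1.option a (X - C q) (monic_X_sub_C q) ?_ ?_, ?_⟩
    · rw [eval₂_sub, eval₂_X, eval₂_C]
      exact sub_eq_zero.2 hq.symm
    · intro f hf hf0 i
      have : Nontrivial R := (algebraMap R L).domain_nontrivial
      rw [degree_X_sub_C] at hf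
      rw [eq_C_of_degree_le_zero (Nat.WithBot.lt_one_iff_le_zero.1 hf)] at hf0 ⊢
      rw [eval₂_C] at hf0
      rw [coeff_C]
      split_ifs
      · exact hf0
      · exact map_zero _
    · rw [Finset.coe_insert, Set.union_insert, ← h2]
      ext x
      simp [Option.exists, eq_comm]

lemma GoodGen.frob {R L : Type*} [CommRing R] [Field L] [Algebra R L]
    (p : ℕ) [hp : Fact p.Prime] [CharP L p] (E : Subfield L)
    (hRE : ∀ c : R, algebraMap R L c ∈ E)
    {σ : Type} {w : σ → L} (hw : GoodGen R w) (hwE : ∀ i, w i ∈ E) (a : L) (ha : a ∉ E) (c : R)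
    (hc : algebraMap R L c = a ^ p) :
    GoodGen R (fun o : Option σ => o.elim a w) := by
  have : Nontrivial R := (algebraMap R L).domain_nontrivial
  have hmem : ∀ x, (MvPolynomial.aeval (R := R) w : MvPolynomial σ R →ₐ[R] L).toRingHom x ∈ E := by
    intro x
    induction x using MvPolynomial.induction_on with
    | C r => simpa using hRE r
    | add x y hx hy => rw [map_add]; exact E.add_mem hx hy
    | mul_X x i hx =>
      rw [map_mul]; refine E.mul_mem hx ?_
      simpa using hwE i
  set φ := (MvPolynomial.aeval (R := R) w : MvPolynomial σ R →ₐ[R] L).toRingHom with hφ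
  let ψ : MvPolynomial σ R →+* E := φ.codRestrict E hmem
  have hψ : ∀ x, ((ψ x : E) : L) = φ x := fun x => rfl
  refine hw.option a (X ^ p - C (MvPolynomial.C c)) (monic_X_pow_sub_C _ hp.out.ne_zero) ?_ ?_
  · rw [eval₂_sub, eval₂_X_pow, eval₂_C]
    simp [hc]
  · intro f hf hf0 i
    rw [degree_X_pow_sub_C hp.out.pos] at hf
    let e : E := ⟨a ^ p, hc ▸ hRE c⟩
    have hirr : Irreducible (X ^ p - C e : E[X]) := by
      refine X_pow_sub_C_irreducible_of_prime hp.out fun b hb => ha ?_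
      have h1 : (b : L) ^ p = a ^ p := congrArg Subtype.val hb
      have h2 : (b : L) = a := frobenius_inj L p h1
      rw [← h2]; exact b.2
    have hmin := minpoly.eq_of_irreducible_of_monic (x := a) hirr
      (by rw [map_sub, map_pow, aeval_X, aeval_C]; exact sub_self _) (monic_X_pow_sub_C _ hp.out.ne_zero)
    have h0 : aeval a (f.map ψ) = 0 := by
      rw [aeval_def, eval₂_map]
      exact hf0
    have hz : f.map ψ = 0 := by
      by_contra hne
      have := minpoly.degree_le_of_ne_zero E a hne h0
      rw [← hmin, degree_X_pow_sub_C hp.out.pos] at this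
      exact absurd (lt_of_le_of_lt (this.trans degree_map_le) hf) (lt_irrefl _)
    have := congrArg (fun g : E[X] => ((g.coeff i : E) : L)) hz
    simp only [coeff_map, hψ, coeff_zero, ZeroMemClass.coe_zero] at this
    exact this

open IntermediateField in
lemma tower {R L : Type*} [CommRing R] [Field L] [Algebra R L]
    (p : ℕ) [hp : Fact p.Prime] [CharP L p] (v : AddValuation L (WithTop ℝ))
    (hinj : Function.Injective (algebraMap R L))
    (hR : ∀ x : L, x ∈ (algebraMap R L).range ↔ ∃ y, 0 ≤ v y ∧ y ^ p = x)
    (S : Finset L) (hS : ∀ s ∈ S, 0 ≤ v s) :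
    ∃ (σ : Type) (w : σ → L), (∀ i, 0 ≤ v (w i)) ∧ GoodGen R w ∧ ∀ s ∈ S, s ∈ Set.range w := by
  classical
  let F : Subfield L := (frobenius L p).fieldRange
  have hpF : ∀ x : L, x ^ p ∈ F := fun x => ⟨x, rfl⟩
  have hRF : ∀ c : R, algebraMap R L c ∈ F := by
    intro c
    obtain ⟨y, -, hy⟩ := (hR _).1 ⟨c, rfl⟩
    rw [← hy]; exact hpF y
  let P : IntermediateField F L → Prop := fun E => ∀ S : Finset L, (∀ s ∈ S, s ∈ E ∧ 0 ≤ v s) →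
    ∃ (σ : Type) (w : σ → L), (∀ i, w i ∈ E ∧ 0 ≤ v (w i)) ∧ GoodGen R w ∧ ∀ s ∈ S, s ∈ Set.range w
  have main : P (adjoin F S) := by
    refine induction_on_adjoin_finset S P ?_ ?_
    · intro S hS
      have hg : GoodGen R (Empty.elim : Empty → L) := by
        intro c hc j hj _
        rw [RingHom.mem_ker] at hj
        have := (MvPolynomial.aeval_injective_iff_of_isEmpty (f := (Empty.elim : Empty → L))).2 hinj
        rw [this (hj.trans (map_zero _).symm)]
        exact zero_mem _
      obtain ⟨τ, w, h1, h2⟩ := hg.redundant S (by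
        intro s hs
        obtain ⟨h3, h4⟩ := hS s hs
        obtain ⟨⟨_, y, rfl⟩, rfl⟩ := IntermediateField.mem_bot.1 h3
        have hy0 : 0 ≤ v y := by
          by_cases hy : y = 0
          · simp [hy]
          have h5 : 0 ≤ v (y ^ p) := h4
          rw [rv_nonneg (pow_ne_zero _ hy), rv_pow hy] at h5
          rw [rv_nonneg hy]
          exact nonneg_of_mul_nonneg_right h5 (by exact_mod_cast hp.out.pos)
        obtain ⟨c, hc⟩ := (hR (y ^ p)).2 ⟨y, hy0, rfl⟩
        refine ⟨MvPolynomial.C c, ?_⟩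
        simp only [AlgHom.toRingHom_eq_coe, RingHom.coe_coe, MvPolynomial.aeval_C]
        exact hc)
      refine ⟨τ, w, ?_, h1, ?_⟩
      · intro i
        have : w i ∈ Set.range w := ⟨i, rfl⟩
        rw [h2] at this
        rcases this with ⟨⟨⟩, _⟩ | h
        exact hS _ h
      · intro s hs
        rw [h2]; exact Or.inr hs
    · intro E u _ ih S hS
      have hrange : ∀ x : L, x ∈ (algebraMap E L).range ↔ x ∈ E := by
        intro x; exact ⟨by rintro ⟨y, rfl⟩; exact y.2, fun h => ⟨⟨x, h⟩, rfl⟩⟩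
      by_cases hu : u ∈ E
      · have : restrictScalars F E⟮u⟯ = E := by
          apply le_antisymm
          · intro x hx
            have h1 : E⟮u⟯ = ⊥ := adjoin_simple_eq_bot_iff.2 (IntermediateField.mem_bot.2 ⟨⟨u, hu⟩, rfl⟩)
            rw [mem_restrictScalars, h1] at hx
            obtain ⟨y, rfl⟩ := IntermediateField.mem_bot.1 hx
            exact y.2
          · intro x hx
            exact (mem_restrictScalars F).2 (E⟮u⟯.algebraMap_mem ⟨x, hx⟩)
        rw [this] at hS ⊢
        exact ih S hS
      have hup : u ^ p ∈ E := E.algebraMap_mem ⟨u ^ p, hpF u⟩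
      have hIntg : IsIntegral E u := ⟨X ^ p - C ⟨u ^ p, hup⟩, monic_X_pow_sub_C _ hp.out.ne_zero,
        by simp⟩
      have hpoly : ∀ s ∈ S, ∃ h : E[X], aeval u h = s := by
        intro s hs
        have h1 := (mem_restrictScalars F).1 (hS s hs).1
        rw [← mem_toSubalgebra, adjoin_simple_toSubalgebra_of_isAlgebraic hIntg.isAlgebraic,
          Algebra.adjoin_singleton_eq_range_aeval] at h1
        exact h1
      choose! h hh using hpoly
      have : CharP E p := ((algebraMap E L).charP_iff (algebraMap E L).injective p).2 inferInstance
      obtain ⟨w0, hw1, hw2, ⟨b, c, i, hw3⟩, hw4⟩ := one_step (v := v) (E := E) p (u := u)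
        ((hrange _).2 hup) (fun h => hu ((hrange _).1 h)) (S.image h) (by
          intro g hg
          obtain ⟨s, hs, rfl⟩ := Finset.mem_image.1 hg
          rw [hh s hs]
          exact (hS s hs).2)
      have hle : ∀ x ∈ E, x ∈ restrictScalars F E⟮u⟯ := fun x hx =>
        (mem_restrictScalars F).2 (E⟮u⟯.algebraMap_mem ⟨x, hx⟩)
      have hw0 : w0 ∈ restrictScalars F E⟮u⟯ := by
        rw [hw3]
        refine mul_mem (hle _ c.2) (zpow_mem (sub_mem ?_ (hle _ b.2)) _)
        exact (mem_restrictScalars F).2 (mem_adjoin_simple_self E u)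
      have : ∀ s ∈ S, ∃ P : E[X], (∀ k, 0 ≤ v (algebraMap E L (P.coeff k))) ∧ aeval w0 P = s := by
        intro s hs
        obtain ⟨P, hP1, hP2⟩ := hw4 (h s) (Finset.mem_image_of_mem h hs)
        exact ⟨P, hP1, hP2.trans (hh s hs)⟩
      choose! P hP1 hP2 using this
      obtain ⟨σ, w, h1, h2, h3⟩ := ih (S.biUnion fun s =>
          (Finset.range ((P s).natDegree + 1)).image fun k => algebraMap E L ((P s).coeff k)) (by
        intro x hx
        simp only [Finset.mem_biUnion, Finset.mem_image] at hx
        obtain ⟨s, hs, k, _, rfl⟩ := hx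
        exact ⟨((P s).coeff k).2, hP1 s hs k⟩)
      obtain ⟨c0, hc0⟩ := (hR (w0 ^ p)).2 ⟨w0, hw2, rfl⟩
      have h4 := GoodGen.frob p E.toSubfield (fun c => E.algebraMap_mem ⟨_, hRF c⟩) h2
        (fun i => (h1 i).1) w0 (fun h => hw1 ((hrange _).2 h)) c0 hc0
      obtain ⟨τ, w', h5, h6⟩ := h4.redundant S (by
        intro s hs
        rw [← hP2 s hs, aeval_eq_sum_range]
        refine sum_mem fun k hk => ?_
        rw [Algebra.smul_def]
        refine mul_mem ?_ (pow_mem ?_ _)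
        · obtain ⟨i, hi⟩ := h3 (algebraMap E L ((P s).coeff k)) (by
            simp only [Finset.mem_biUnion, Finset.mem_image]
            exact ⟨s, hs, k, hk, rfl⟩)
          exact ⟨MvPolynomial.X (some i), by simpa using hi⟩
        · exact ⟨MvPolynomial.X none, by simp⟩)
      refine ⟨τ, w', ?_, h5, ?_⟩
      · intro i
        have : w' i ∈ Set.range w' := ⟨i, rfl⟩
        rw [h6] at this
        rcases this with ⟨(_ | k), hk⟩ | hk
        · rw [← hk]; exact ⟨hw0, hw2⟩
        · rw [← hk]; exact ⟨hle _ (h1 k).1, (h1 k).2⟩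
        · exact hS _ hk
      · intro s hs
        rw [h6]; exact Or.inr hs
  obtain ⟨σ, w, h1, h2, h3⟩ := main S (fun s hs => ⟨subset_adjoin F _ hs, hS s hs⟩)
  exact ⟨σ, w, fun i => (h1 i).2, h2, h3⟩
end tower

section h1tf

lemma finite_detect {R S L : Type*} [CommRing R] [CommRing S] [Field L] [Algebra R S] [Algebra R L]
    [Algebra S L] [IsScalarTower R S L] (x : MvPolynomial S R)
    (hx : x ∈ RingHom.ker (MvPolynomial.aeval (R := R) (id : S → S)) ^ 2) :
    ∃ T : Finset S, ∀ (σ : Type) (w : σ → L) (φ : MvPolynomial S R →ₐ[R] MvPolynomial σ R),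
      (∀ a ∈ T, MvPolynomial.aeval w (φ (MvPolynomial.X a)) = algebraMap S L a) →
      φ x ∈ RingHom.ker (MvPolynomial.aeval (R := R) w) ^ 2 := by
  classical
  rw [pow_two] at hx
  induction hx using Submodule.mul_induction_on' with
  | mem_mul_mem m hm n hn =>
    refine ⟨m.vars ∪ n.vars, fun σ w φ h => ?_⟩
    have key : ∀ m ∈ RingHom.ker (MvPolynomial.aeval (R := R) (id : S → S)),
        (∀ a ∈ m.vars, MvPolynomial.aeval w (φ (MvPolynomial.X a)) = algebraMap S L a) →
        φ m ∈ RingHom.ker (MvPolynomial.aeval (R := R) w) := by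
      intro m hm ha
      rw [RingHom.mem_ker] at hm ⊢
      have := MvPolynomial.hom_congr_vars
        (f₁ := ((MvPolynomial.aeval (R := R) w).comp φ).toRingHom)
        (f₂ := ((IsScalarTower.toAlgHom R S L).comp
          (MvPolynomial.aeval (R := R) (id : S → S))).toRingHom) (p₁ := m) (p₂ := m)
          (by ext r; simpa using IsScalarTower.algebraMap_apply R S L r) (fun i hi _ => by simpa using ha i hi) rfl
      refine this.trans ?_
      change algebraMap S L (MvPolynomial.aeval (R := R) (id : S → S) m) = 0
      rw [hm, map_zero]
    rw [map_mul, pow_two]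
    exact Ideal.mul_mem_mul (key m hm fun a ha => h a (Finset.mem_union_left _ ha))
      (key n hn fun a ha => h a (Finset.mem_union_right _ ha))
  | add x _ y _ hx hy =>
    obtain ⟨T, hT⟩ := hx
    obtain ⟨U, hU⟩ := hy
    refine ⟨T ∪ U, fun σ w φ h => ?_⟩
    rw [map_add]
    exact add_mem (hT σ w φ fun a ha => h a (Finset.mem_union_left _ ha))
      (hU σ w φ fun a ha => h a (Finset.mem_union_right _ ha))

lemma ker_sq_of_tower {L : Type*} [Field L] (p : ℕ) [hp : Fact p.Prime] [CharP L p]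
    (v : AddValuation L (WithTop ℝ)) {R : Type*} [CommRing R] [Algebra R v.unitBall]
    (hinj : Function.Injective (algebraMap R v.unitBall))
    (hR : ∀ x : v.unitBall, x ∈ (algebraMap R v.unitBall).range ↔ ∃ y, y ^ p = x)
    (c : R) (hc : algebraMap R v.unitBall c ≠ 0) (j : MvPolynomial v.unitBall R)
    (hj : j ∈ RingHom.ker (MvPolynomial.aeval (R := R) (id : v.unitBall → v.unitBall)))
    (hcj : MvPolynomial.C c * j ∈
      RingHom.ker (MvPolynomial.aeval (R := R) (id : v.unitBall → v.unitBall)) ^ 2) :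
    j ∈ RingHom.ker (MvPolynomial.aeval (R := R) (id : v.unitBall → v.unitBall)) ^ 2 := by
  classical
  letI : Algebra R L := ((algebraMap v.unitBall L).comp (algebraMap R v.unitBall)).toAlgebra
  haveI : IsScalarTower R v.unitBall L := IsScalarTower.of_algebraMap_eq fun _ => rfl
  have hRL : ∀ x : L, x ∈ (algebraMap R L).range ↔ ∃ y, 0 ≤ v y ∧ y ^ p = x := by
    intro x
    constructor
    · rintro ⟨r, rfl⟩
      obtain ⟨y, hy⟩ := (hR (algebraMap R v.unitBall r)).1 ⟨r, rfl⟩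
      refine ⟨y, y.2, ?_⟩
      exact congrArg Subtype.val hy
    · rintro ⟨y, hy, rfl⟩
      obtain ⟨r, hr⟩ := (hR (⟨y, hy⟩ ^ p)).2 ⟨_, rfl⟩
      exact ⟨r, congrArg Subtype.val hr⟩
  obtain ⟨T, hT⟩ := finite_detect (L := L) _ hcj
  obtain ⟨σ, w, h1, h2, h3⟩ := tower (R := R) p v
    (Subtype.val_injective.comp hinj) hRL ((T ∪ j.vars).image Subtype.val) (by
      intro s hs
      obtain ⟨a, -, rfl⟩ := Finset.mem_image.1 hs
      exact a.2)
  have h4 : ∀ a, a ∈ T ∪ j.vars → ∃ i, w i = a := fun a ha =>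
    h3 a (Finset.mem_image_of_mem _ ha)
  let φ : MvPolynomial v.unitBall R →ₐ[R] MvPolynomial σ R :=
    MvPolynomial.aeval fun a => if h : a ∈ T ∪ j.vars then MvPolynomial.X (h4 a h).choose else 0
  have hφ : ∀ a ∈ T ∪ j.vars, ∃ i, φ (MvPolynomial.X a) = MvPolynomial.X i ∧ w i = a := by
    intro a ha
    refine ⟨(h4 a ha).choose, ?_, (h4 a ha).choose_spec⟩
    simp only [φ, MvPolynomial.aeval_X, dif_pos ha]
  let w' : σ → v.unitBall := fun i => ⟨w i, h1 i⟩
  let ψ : MvPolynomial σ R →ₐ[R] MvPolynomial v.unitBall R := MvPolynomial.rename w'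
  have hψφ : ψ (φ j) = j := by
    refine MvPolynomial.hom_congr_vars (f₁ := (ψ.comp φ).toRingHom)
      (f₂ := RingHom.id _) (p₁ := j) (p₂ := j) ?_ ?_ rfl
    · ext r; simp
    · intro a ha _
      obtain ⟨i, hi, hw⟩ := hφ a (Finset.mem_union_right _ ha)
      change ψ (φ (MvPolynomial.X a)) = MvPolynomial.X a
      rw [hi]
      simp only [ψ, MvPolynomial.rename_X]
      congr 1
      exact Subtype.ext hw
  have hcomp : ∀ x, ((MvPolynomial.aeval (R := R) (id : v.unitBall → v.unitBall) (ψ x) :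
      v.unitBall) : L) = MvPolynomial.aeval w x := by
    intro x
    have : ((IsScalarTower.toAlgHom R v.unitBall L).comp
      ((MvPolynomial.aeval (R := R) (id : v.unitBall → v.unitBall)).comp ψ)) =
        MvPolynomial.aeval w := by
      apply MvPolynomial.algHom_ext
      intro i
      simp [ψ, w']
      rfl
    exact DFunLike.congr_fun this x
  have h5 : MvPolynomial.C c * φ j ∈ RingHom.ker (MvPolynomial.aeval (R := R) w) ^ 2 := by
    have := hT σ w φ (by
      intro a ha
      obtain ⟨i, hi, hw⟩ := hφ a (Finset.mem_union_left _ ha)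
      rw [hi, MvPolynomial.aeval_X, hw]; rfl)
    rw [map_mul] at this
    convert this using 2
    exact (φ.commutes c).symm
  have h6 : φ j ∈ RingHom.ker (MvPolynomial.aeval (R := R) w) := by
    rw [RingHom.mem_ker, ← hcomp, hψφ, (RingHom.mem_ker).1 hj]; rfl
  have h7 := h2 c (by intro h; exact hc (Subtype.ext h)) _ h6 h5
  rw [← hψφ]
  have h8 : Ideal.map ψ (RingHom.ker (MvPolynomial.aeval (R := R) w)) ≤
      RingHom.ker (MvPolynomial.aeval (R := R) (id : v.unitBall → v.unitBall)) := by
    rw [Ideal.map_le_iff_le_comap]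
    intro x hx
    rw [Ideal.mem_comap, RingHom.mem_ker]
    apply Subtype.ext
    rw [hcomp]; exact hx
  have h9 := Ideal.mem_map_of_mem ψ h7
  rw [Ideal.map_pow] at h9
  exact Ideal.pow_right_mono h8 2 h9

lemma h1_torsionFree {L : Type*} [Field L] (p : ℕ) [hp : Fact p.Prime] [CharP L p]
    (v : AddValuation L (WithTop ℝ)) {R : Type*} [CommRing R] [Algebra R v.unitBall]
    (hinj : Function.Injective (algebraMap R v.unitBall))
    (hR : ∀ x : v.unitBall, x ∈ (algebraMap R v.unitBall).range ↔ ∃ y, y ^ p = x)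
    (r : v.unitBall) (hr : r ≠ 0) (m : Algebra.H1Cotangent R v.unitBall) (hrm : r • m = 0) :
    m = 0 := by
  obtain ⟨c, hc⟩ := (hR (r ^ p)).2 ⟨r, rfl⟩
  have h1 : (algebraMap R v.unitBall c) • m = 0 := by
    rw [hc, show r ^ p = r ^ (p - 1) * r by rw [← pow_succ, Nat.sub_add_cancel hp.out.pos],
      mul_smul, hrm, smul_zero]
  rw [algebraMap_smul] at h1
  have hc0 : algebraMap R v.unitBall c ≠ 0 := by rw [hc]; exact pow_ne_zero _ hr
  apply Algebra.Extension.h1Cotangentι_ext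
  have h2 : c • m.1 = 0 := congrArg Subtype.val h1
  obtain ⟨⟨j, hj⟩, hjm⟩ := Algebra.Extension.Cotangent.mk_surjective m.1
  rw [← hjm] at h2 ⊢
  rw [Algebra.Extension.H1Cotangent.val_zero, Algebra.Extension.Cotangent.mk_eq_zero_iff]
  have h3 : Algebra.Extension.Cotangent.mk
    ((algebraMap R (Algebra.Generators.self R v.unitBall).toExtension.Ring c) • ⟨j, hj⟩) = 0 := by
    rw [map_smul, algebraMap_smul]; exact h2
  rw [Algebra.Extension.Cotangent.mk_eq_zero_iff] at h3
  exact ker_sq_of_tower p v hinj hR c hc0 j hj h3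
end h1tf

section gone
open TensorProduct

lemma cotC_mk_self_iff {k S : Type*} [CommRing k] [CommRing S] [Algebra k S]
    (j : MvPolynomial S k) (hj : j ∈ (Algebra.Generators.self k S).toExtension.ker) :
    (Algebra.Generators.self k S).toExtension.cotangentComplex
      (Algebra.Extension.Cotangent.mk ⟨j, hj⟩) = 0 ↔
      ∀ i : S, MvPolynomial.aeval (R := k) (id : S → S) (MvPolynomial.pderiv i j) = 0 := by
  rw [Algebra.Extension.cotangentComplex_mk]
  rw [← (Algebra.Generators.self k S).cotangentSpaceBasis.repr.map_eq_zero_iff, Finsupp.ext_iff]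
  refine forall_congr' fun i => ?_
  rw [Algebra.Generators.cotangentSpaceBasis_repr_one_tmul]
  rfl

lemma ker_self_iff {k S : Type*} [CommRing k] [CommRing S] [Algebra k S]
    (j : MvPolynomial S k) : j ∈ (Algebra.Generators.self k S).toExtension.ker ↔
    MvPolynomial.aeval (R := k) (id : S → S) j = 0 := by
  exact Iff.rfl

lemma h1_field_subsingleton (k L : Type*) [Field k] [PerfectField k] [Field L] [Algebra k L] :
    Subsingleton (Algebra.H1Cotangent k L) := by
  refine subsingleton_of_forall_eq 0 fun m => ?_
  apply Algebra.Extension.h1Cotangentι_ext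
  obtain ⟨⟨j, hj⟩, hjm⟩ := Algebra.Extension.Cotangent.mk_surjective m.1
  have hm : (Algebra.Generators.self k L).toExtension.cotangentComplex m.1 = 0 := m.2
  rw [← hjm] at hm ⊢
  rw [Algebra.Extension.H1Cotangent.val_zero, Algebra.Extension.Cotangent.mk_eq_zero_iff]
  replace hm := (cotC_mk_self_iff (k := k) (S := L) j hj).1 hm
  replace hj := (ker_self_iff (k := k) (S := L) j).1 hj
  change MvPolynomial L k at j
  set L' := IntermediateField.adjoin k (j.vars : Set L) with hL'
  have hE : Algebra.EssFiniteType k L' :=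
    IntermediateField.essFiniteType_iff.2 ⟨j.vars, rfl⟩
  have hsub : Subsingleton (Algebra.H1Cotangent k L') := inferInstance
  have hinj : Function.Injective ((↑) : L' → L) := Subtype.val_injective
  obtain ⟨j', hj'⟩ := MvPolynomial.exists_rename_eq_of_vars_subset_range j ((↑) : L' → L) hinj
    (by
      intro x hx
      exact ⟨⟨x, IntermediateField.subset_adjoin _ _ hx⟩, rfl⟩)
  have hae : ∀ q : MvPolynomial L' k, MvPolynomial.aeval (R := k) (id : L → L)
      (MvPolynomial.rename ((↑) : L' → L) q) =
      ((MvPolynomial.aeval (R := k) (id : L' → L') q : L') : L) := by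
    intro q
    rw [MvPolynomial.aeval_rename]
    have : (L'.val).comp (MvPolynomial.aeval (R := k) (id : L' → L')) =
      MvPolynomial.aeval ((id : L → L) ∘ ((↑) : L' → L)) := by
      apply MvPolynomial.algHom_ext
      intro i; simp
    exact (DFunLike.congr_fun this q).symm
  have hk' : MvPolynomial.aeval (R := k) (id : L' → L') j' = 0 := by
    apply hinj; rw [← hae, hj', hj]; rfl
  have hd' : (Algebra.Generators.self k L').toExtension.cotangentComplex
      (Algebra.Extension.Cotangent.mk ⟨j', (ker_self_iff j').2 hk'⟩) = 0 := by
    rw [cotC_mk_self_iff]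
    intro i
    apply hinj
    rw [← hae, ← MvPolynomial.pderiv_rename hinj, hj']
    exact hm _
  have h0 : (Algebra.Extension.Cotangent.mk ⟨j', (ker_self_iff j').2 hk'⟩ :
      (Algebra.Generators.self k L').toExtension.Cotangent) = 0 := by
    have h1 := (Algebra.Extension.subsingleton_h1Cotangent
      (Algebra.Generators.self k L').toExtension).1 hsub
    exact h1 (hd'.trans (map_zero _).symm)
  rw [Algebra.Extension.Cotangent.mk_eq_zero_iff] at h0
  replace h0 : j' ∈ RingHom.ker (MvPolynomial.aeval (R := k) (id : L' → L')) ^ 2 := h0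
  change j ∈ RingHom.ker (MvPolynomial.aeval (R := k) (id : L → L)) ^ 2
  have h8 : Ideal.map (MvPolynomial.rename (R := k) ((↑) : L' → L))
    (RingHom.ker (MvPolynomial.aeval (R := k) (id : L' → L'))) ≤
      RingHom.ker (MvPolynomial.aeval (R := k) (id : L → L)) := by
    rw [Ideal.map_le_iff_le_comap]
    intro x hx
    rw [Ideal.mem_comap, RingHom.mem_ker, hae, (RingHom.mem_ker).1 hx]; rfl
  have h9 := Ideal.mem_map_of_mem (MvPolynomial.rename (R := k) ((↑) : L' → L)) h0
  rw [Ideal.map_pow] at h9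
  have := Ideal.pow_right_mono h8 2 h9
  rwa [hj'] at this

/-- Frobenius kills first cotangent homology. -/
lemma h1_map_frob_zero (p : ℕ) [hp : Fact p.Prime] {R S : Type*} [CommRing R] [CommRing S]
    [IsReduced S] [CharP S p]
    [Algebra (ZMod p) R] [Algebra (ZMod p) S] [Algebra R S] [IsScalarTower (ZMod p) R S]
    (hR : ∀ x : S, x ∈ (algebraMap R S).range ↔ ∃ y, y ^ p = x)
    (m : Algebra.H1Cotangent (ZMod p) R) :
    Algebra.H1Cotangent.map (ZMod p) (ZMod p) R S m = 0 := by
  have hs : ∀ r : R, ∃ y : S, y ^ p = algebraMap R S r := fun r => (hR _).1 ⟨r, rfl⟩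
  choose s hs using hs
  let g : (Algebra.Generators.self (ZMod p) R).Hom (Algebra.Generators.self (ZMod p) S) :=
    { val := fun r => (MvPolynomial.X (s r)) ^ p
      aeval_val := fun r => by
        change MvPolynomial.aeval (R := ZMod p) (id : S → S) ((MvPolynomial.X (s r)) ^ p) = _
        simp [hs] }
  have h1 : Algebra.H1Cotangent.map (ZMod p) (ZMod p) R S =
    Algebra.Extension.H1Cotangent.map g.toExtensionHom := Algebra.Extension.H1Cotangent.map_eq _ _
  rw [h1]
  apply Algebra.Extension.h1Cotangentι_ext
  obtain ⟨⟨j, hj⟩, hjm⟩ := Algebra.Extension.Cotangent.mk_surjective m.1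
  have h2 : ((Algebra.Extension.H1Cotangent.map g.toExtensionHom) m).1 =
    Algebra.Extension.Cotangent.map g.toExtensionHom m.1 := rfl
  rw [h2, ← hjm, Algebra.Extension.Cotangent.map_mk,
    Algebra.Extension.H1Cotangent.val_zero, Algebra.Extension.Cotangent.mk_eq_zero_iff]
  replace hj := (ker_self_iff (k := ZMod p) (S := R) j).1 hj
  change MvPolynomial R (ZMod p) at j
  have h3 : g.toExtensionHom.toAlgHom j = (MvPolynomial.rename s j) ^ p := by
    rw [← MvPolynomial.expand_zmod]
    have : g.toAlgHom = (MvPolynomial.expand p).comp (MvPolynomial.rename (R := ZMod p) s) := by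
      apply MvPolynomial.algHom_ext
      intro i
      rw [Algebra.Generators.Hom.toAlgHom_X]
      simp [g]
    exact DFunLike.congr_fun this j
  have h4 : MvPolynomial.aeval (R := ZMod p) (id : S → S) (MvPolynomial.rename s j) = 0 := by
    have h5 : MvPolynomial.aeval (R := ZMod p) (id : S → S) (g.toExtensionHom.toAlgHom j) = 0 := by
      have := g.algebraMap_toAlgHom j
      refine this.trans ?_
      exact (congrArg (algebraMap R S) hj).trans (map_zero _)
    rw [h3, map_pow] at h5
    exact eq_zero_of_pow_eq_zero h5
  have h6 : g.toExtensionHom.toAlgHom j ∈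
    (Algebra.Generators.self (ZMod p) S).toExtension.ker ^ 2 := by
    rw [h3]
    exact Ideal.pow_le_pow_right hp.out.two_le (Ideal.pow_mem_pow ((ker_self_iff _).2 h4) p)
  exact h6

end gone

section gtwo
open TensorProduct

lemma unitBall_mem {L : Type*} [CommRing L] (v : AddValuation L (WithTop ℝ)) (x : L) :
    x ∈ v.unitBall ↔ 0 ≤ v x := Iff.rfl

lemma unitBall_cases {L : Type*} [Field L] (v : AddValuation L (WithTop ℝ)) (x : L) :
    x ∈ v.unitBall ∨ x⁻¹ ∈ v.unitBall := by
  rw [unitBall_mem, unitBall_mem]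
  by_cases hx : x = 0
  · left; subst hx; simp
  by_contra! h
  have h1 : v x + v x⁻¹ = 0 := by
    rw [← AddValuation.map_mul, mul_inv_cancel₀ hx, AddValuation.map_one]
  have h2 : v x + v x⁻¹ < 0 + 0 := WithTop.add_lt_add h.1 h.2
  rw [h1] at h2
  simp at h2

instance unitBall_valuationRing {L : Type*} [Field L] (v : AddValuation L (WithTop ℝ)) :
    ValuationRing v.unitBall where
  cond' a b := by
    by_cases hb : (b : L) = 0
    · exact ⟨0, Or.inl (Subtype.ext (by simp [hb]))⟩
    by_cases ha : (a : L) = 0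
    · exact ⟨0, Or.inr (Subtype.ext (by simp [ha]))⟩
    rcases unitBall_cases v ((b : L) / a) with h | h
    · exact ⟨⟨_, h⟩, Or.inl (Subtype.ext (by simp; field_simp))⟩
    · exact ⟨⟨_, h⟩, Or.inr (Subtype.ext (by simp; field_simp))⟩

instance unitBall_isFractionRing {L : Type*} [Field L] (v : AddValuation L (WithTop ℝ)) :
    IsFractionRing v.unitBall L := by
  refine IsFractionRing.of_field _ _ fun z => ?_
  by_cases hz : z = 0
  · exact ⟨0, 0, by simp [hz]⟩
  rcases unitBall_cases v z with h | h
  · exact ⟨⟨z, h⟩, 1, by simp; rfl⟩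
  · exact ⟨1, ⟨_, h⟩, by simp; change z = (z⁻¹)⁻¹; simp⟩

lemma valuationRing_of_frob (p : ℕ) {R S : Type*} [CommRing R] [CommRing S] [IsDomain S]
    [IsDomain R] [ValuationRing S] [Algebra R S]
    (hinj : Function.Injective (algebraMap R S))
    (hR : ∀ x : S, x ∈ (algebraMap R S).range ↔ ∃ y, y ^ p = x) : ValuationRing R where
  cond' a b := by
    obtain ⟨x, hx⟩ := (hR _).1 ⟨a, rfl⟩
    obtain ⟨y, hy⟩ := (hR _).1 ⟨b, rfl⟩
    obtain ⟨c, hc⟩ := ValuationRing.cond x y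
    obtain ⟨d, hd⟩ := (hR (c ^ p)).2 ⟨c, rfl⟩
    refine ⟨d, hc.imp ?_ ?_⟩
    · intro h
      apply hinj
      rw [map_mul, ← hx, ← hy, hd, ← h, mul_pow]
    · intro h
      apply hinj
      rw [map_mul, ← hx, ← hy, hd, ← h, mul_pow]

lemma flat_of_tf {R M : Type*} [CommRing R] [IsDomain R] [ValuationRing R] [AddCommGroup M]
    [Module R M] (h : ∀ (r : R) (m : M), r • m = 0 → r = 0 ∨ m = 0) : Module.Flat R M := by
  rw [Module.Flat.flat_iff_torsion_eq_bot_of_isBezout, eq_bot_iff]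
  rintro m ⟨⟨r, hr⟩, h1⟩
  rcases h r m h1 with h2 | h2
  · exact absurd h2 (nonZeroDivisors.ne_zero hr)
  · exact h2

lemma flat_tf {R M : Type*} [CommRing R] [IsDomain R] [AddCommGroup M]
    [Module R M] [Module.Flat R M] (r : R) (m : M) (h : r • m = 0) : r = 0 ∨ m = 0 := by
  by_cases hr : r = 0
  · exact Or.inl hr
  · right
    exact Module.Flat.isSMulRegular_of_nonZeroDivisors (mem_nonZeroDivisors_of_ne_zero hr)
      (h.trans (smul_zero r).symm)

lemma flat_frob (p : ℕ) {R S : Type*} [CommRing R] [CommRing S] [IsDomain S]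
    [ValuationRing S] [Algebra R S]
    (hinj : Function.Injective (algebraMap R S))
    (hR : ∀ x : S, x ∈ (algebraMap R S).range ↔ ∃ y, y ^ p = x) : Module.Flat R S := by
  have hd : IsDomain R := hinj.isDomain (algebraMap R S)
  have hv := valuationRing_of_frob p hinj hR
  apply flat_of_tf
  intro r m h
  rw [Algebra.smul_def, mul_eq_zero] at h
  refine h.imp_left fun h => ?_
  exact hinj (h.trans (map_zero _).symm)

lemma h1_prime_subsingleton (p : ℕ) [hp : Fact p.Prime] {R S : Type*} [CommRing R] [CommRing S]
    [IsDomain S] [ValuationRing S] [Algebra R S] [CharP S p]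
    [Algebra (ZMod p) R] [Algebra (ZMod p) S] [IsScalarTower (ZMod p) R S]
    (hinj : Function.Injective (algebraMap R S))
    (hR : ∀ x : S, x ∈ (algebraMap R S).range ↔ ∃ y, y ^ p = x)
    (htf : ∀ (r : S) (_ : r ≠ 0) (m : Algebra.H1Cotangent R S), r • m = 0 → m = 0) :
    Subsingleton (Algebra.H1Cotangent (ZMod p) S) := by
  have hfl := flat_frob p hinj hR
  refine subsingleton_of_forall_eq 0 fun m => ?_
  let L := FractionRing S
  have hsub : Subsingleton (Algebra.H1Cotangent (ZMod p) L) := h1_field_subsingleton _ _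
  have hloc := Algebra.H1Cotangent.isLocalizedModule (ZMod p) L (nonZeroDivisors S)
  obtain ⟨⟨c, hc⟩, hcm⟩ := (IsLocalizedModule.eq_zero_iff (nonZeroDivisors S)
    (Algebra.H1Cotangent.map (ZMod p) (ZMod p) S L) (m := m)).1 (Subsingleton.elim _ _)
  have hex := Algebra.H1Cotangent.exact_liftBaseChange_map_of_flat (ZMod p) R S
  have h1 : Algebra.H1Cotangent.map (ZMod p) R S S m = 0 := by
    apply htf c (nonZeroDivisors.ne_zero hc)
    rw [← map_smul]
    have : c • m = 0 := hcm
    rw [this, map_zero]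
  obtain ⟨z, hz⟩ := (hex m).1 h1
  rw [← hz]
  clear hz
  induction z using TensorProduct.induction_on with
  | zero => rw [map_zero]
  | add x y hx hy => rw [map_add, hx, hy, add_zero]
  | tmul a b =>
    rw [LinearMap.liftBaseChange_tmul, h1_map_frob_zero p hR, smul_zero]

lemma omega_flat (p : ℕ) [hp : Fact p.Prime] {R S : Type*} [CommRing R] [CommRing S]
    [IsDomain S] [ValuationRing S] [Algebra R S] [CharP S p]
    [Algebra (ZMod p) R] [Algebra (ZMod p) S] [IsScalarTower (ZMod p) R S]
    (hinj : Function.Injective (algebraMap R S))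
    (hR : ∀ x : S, x ∈ (algebraMap R S).range ↔ ∃ y, y ^ p = x)
    (htf : ∀ (r : S) (_ : r ≠ 0) (m : Algebra.H1Cotangent R S), r • m = 0 → m = 0) :
    Module.Flat R (Ω[R⁄(ZMod p)]) := by
  have hd : IsDomain R := hinj.isDomain (algebraMap R S)
  have hv := valuationRing_of_frob p hinj hR
  have hfl := flat_frob p hinj hR
  have hsub := h1_prime_subsingleton p hinj hR htf
  have hff : Module.FaithfullyFlat R S := by
    haveI : IsLocalHom (algebraMap R S) := by
      constructor
      intro a ha
      obtain ⟨u, hu⟩ := ha.exists_right_inv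
      obtain ⟨b, hb⟩ := (hR (u ^ p)).2 ⟨u, rfl⟩
      refine IsUnit.of_mul_eq_one (a ^ (p - 1) * b) ?_
      apply hinj
      rw [← mul_assoc, ← pow_succ', Nat.sub_add_cancel hp.out.pos, map_mul, map_pow, hb,
        ← mul_pow, hu, one_pow, map_one]
    exact Module.FaithfullyFlat.of_flat_of_isLocalHom
  have hz : KaehlerDifferential.mapBaseChange (ZMod p) R S = 0 := by
    apply LinearMap.ext
    intro z
    induction z using TensorProduct.induction_on with
    | zero => rw [map_zero, map_zero]
    | add x y hx hy => rw [map_add, hx, hy, map_add]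
    | tmul a b =>
      rw [KaehlerDifferential.mapBaseChange_tmul, LinearMap.zero_apply]
      have : KaehlerDifferential.map (ZMod p) (ZMod p) R S = 0 := by
        apply Derivation.liftKaehlerDifferential_unique
        ext x
        obtain ⟨y, hy⟩ := (hR _).1 ⟨x, rfl⟩
        simp [← hy, ← Nat.cast_smul_eq_nsmul S]
      rw [this, LinearMap.zero_apply, smul_zero]
  have hsurj : Function.Surjective (Algebra.H1Cotangent.δ (ZMod p) R S) := by
    intro y
    exact (Algebra.H1Cotangent.exact_δ_mapBaseChange (ZMod p) R S y).1 (by rw [hz]; rfl)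
  have hinj2 : ∀ m, Algebra.H1Cotangent.δ (ZMod p) R S m = 0 → m = 0 := by
    intro m hm
    obtain ⟨n, hn⟩ := (Algebra.H1Cotangent.exact_map_δ (ZMod p) R S m).1 hm
    rw [← hn, Subsingleton.elim n 0, map_zero]
  apply flat_of_tf
  intro r m hrm
  by_cases hr : r = 0
  · exact Or.inl hr
  right
  obtain ⟨w, hw⟩ := hsurj ((1 : S) ⊗ₜ m)
  have h1 : algebraMap R S r • w = 0 := by
    apply hinj2
    rw [map_smul, hw, algebraMap_smul, ← TensorProduct.tmul_smul, hrm, TensorProduct.tmul_zero]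
  have h2 := htf _ (fun h => hr (hinj (h.trans (map_zero _).symm))) _ h1
  rw [h2, map_zero] at hw
  exact (Module.FaithfullyFlat.one_tmul_eq_zero_iff R _ m).1 hw.symm

lemma zmod_tower (p : ℕ) (A B : Type*) [CommRing A] [CommRing B]
    [Algebra (ZMod p) A] [Algebra (ZMod p) B] [Algebra A B] : IsScalarTower (ZMod p) A B :=
  IsScalarTower.of_algebraMap_eq' (RingHom.ext_zmod _ _)

lemma h1_tf_of (p : ℕ) [hp : Fact p.Prime] {A B : Type*} [CommRing A] [CommRing B] [IsDomain B]
    [Algebra A B] [Algebra (ZMod p) A] [Algebra (ZMod p) B] [IsScalarTower (ZMod p) A B]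
    [Module.Flat A (Ω[A⁄(ZMod p)])] [Subsingleton (Algebra.H1Cotangent (ZMod p) B)]
    (r : B) (m : Algebra.H1Cotangent A B) (h : r • m = 0) : r = 0 ∨ m = 0 := by
  have h1 : r • Algebra.H1Cotangent.δ (ZMod p) A B m = 0 := by rw [← map_smul, h, map_zero]
  refine (flat_tf (M := B ⊗[A] Ω[A⁄(ZMod p)]) _ _ h1).imp_right fun h2 => ?_
  obtain ⟨n, hn⟩ := (Algebra.H1Cotangent.exact_map_δ (ZMod p) A B m).1 h2
  rw [← hn, Subsingleton.elim n 0, map_zero]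

/-- Torsion-freeness for unit balls. -/
lemma h1_unitBall_tf (p : ℕ) [hp : Fact p.Prime] {K L : Type*} [Field K] [Field L] [CharP K p]
    [CharP L p] (vK : AddValuation K (WithTop ℝ)) (vL : AddValuation L (WithTop ℝ))
    [Algebra vK.unitBall vL.unitBall]
    (r : vL.unitBall) (m : Algebra.H1Cotangent vK.unitBall vL.unitBall) (h : r • m = 0) :
    r = 0 ∨ m = 0 := by
  haveI hcK : CharP vK.unitBall p :=
    (RingHom.charP_iff vK.unitBall.subtype Subtype.val_injective p).2 inferInstance
  haveI hcL : CharP vL.unitBall p :=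
    (RingHom.charP_iff vL.unitBall.subtype Subtype.val_injective p).2 inferInstance
  let aK : Algebra (ZMod p) vK.unitBall := ZMod.algebra _ p
  let aL : Algebra (ZMod p) vL.unitBall := ZMod.algebra _ p
  have hfl : Module.Flat vK.unitBall (Ω[vK.unitBall⁄(ZMod p)]) := by
    refine @omega_flat p hp vK.unitBall vK.unitBall _ _ _ _ (frobenius vK.unitBall p).toAlgebra _
      aK aK ?_ ?_ ?_ ?_
    · exact @zmod_tower p _ _ _ _ aK aK (frobenius vK.unitBall p).toAlgebra
    · exact frobenius_inj _ p
    · intro x; exact Iff.rfl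
    · exact @h1_torsionFree K _ p _ _ vK _ _ (frobenius vK.unitBall p).toAlgebra
        (frobenius_inj _ p) (fun x => Iff.rfl)
  have hs : Subsingleton (Algebra.H1Cotangent (ZMod p) vL.unitBall) := by
    refine @h1_prime_subsingleton p hp vL.unitBall vL.unitBall _ _ _ _
      (frobenius vL.unitBall p).toAlgebra _ aL aL ?_ ?_ ?_ ?_
    · exact @zmod_tower p _ _ _ _ aL aL (frobenius vL.unitBall p).toAlgebra
    · exact frobenius_inj _ p
    · intro x; exact Iff.rfl
    · exact @h1_torsionFree L _ p _ _ vL _ _ (frobenius vL.unitBall p).toAlgebra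
        (frobenius_inj _ p) (fun x => Iff.rfl)
  exact @h1_tf_of p hp vK.unitBall vL.unitBall _ _ _ _ aK aL
    (@zmod_tower p _ _ _ _ aK aL _) hfl hs r m h

end gtwo

section hsec
open TensorProduct

lemma finrank_h1_adjoinRoot {K L : Type*} [Field K] [Field L] [Algebra K L]
    (φ : Polynomial K →ₐ[K] L) (hφ : Function.Surjective φ) (f : Polynomial K)
    (hf : Irreducible f) (hker : ∀ g, φ g = 0 ↔ f ∣ g) (hder : Polynomial.derivative f = 0) :
    Module.finrank L (Algebra.H1Cotangent K L) = 1 := by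
  let P : Algebra.Extension K L := Algebra.Extension.ofSurjective φ hφ
  let h2 : P.Hom (Algebra.Generators.self K L).toExtension :=
    Algebra.Extension.Hom.ofAlgHom
      (Polynomial.aeval (MvPolynomial.X (φ Polynomial.X)) :
        Polynomial K →ₐ[K] MvPolynomial L K) (by
        apply Polynomial.algHom_ext
        change MvPolynomial.aeval (R := K) (id : L → L) (Polynomial.aeval
          (MvPolynomial.X (φ Polynomial.X) : MvPolynomial L K) Polynomial.X) = φ Polynomial.X
        simp)
  let e : Algebra.H1Cotangent K L ≃ₗ[L] P.H1Cotangent :=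
    Algebra.Extension.H1Cotangent.equiv P.defaultHom h2
  rw [e.finrank_eq]
  have hfk : f ∈ RingHom.ker φ := (hker f).2 dvd_rfl
  let fk : P.ker := ⟨f, hfk⟩
  have hcc : P.cotangentComplex (Algebra.Extension.Cotangent.mk fk) = 0 := by
    rw [Algebra.Extension.cotangentComplex_mk]
    have : KaehlerDifferential.D K (Polynomial K) f = 0 := by
      rw [show KaehlerDifferential.D K (Polynomial K) f = Polynomial.derivative f •
        KaehlerDifferential.D K (Polynomial K) Polynomial.X from ?_, hder, zero_smul]
      conv_lhs => rw [← Polynomial.aeval_X_left_apply f]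
      rw [Derivation.map_aeval]
      simp
    have h0 : KaehlerDifferential.D K P.Ring f = 0 := this
    change (1 : L) ⊗ₜ[P.Ring] (KaehlerDifferential.D K P.Ring f) = 0
    rw [h0, TensorProduct.tmul_zero]
  refine finrank_eq_one_iff_of_nonzero' (⟨Algebra.Extension.Cotangent.mk fk, hcc⟩ : P.H1Cotangent)
    ?_ |>.2 ?_
  · intro h
    have h1 := congrArg Subtype.val h
    have h3 := (Algebra.Extension.Cotangent.mk_eq_zero_iff fk).1 h1
    have h4 : f ∈ (RingHom.ker φ) ^ 2 := h3
    have h5 : RingHom.ker φ = Ideal.span {f} := by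
      ext g; rw [RingHom.mem_ker, hker, Ideal.mem_span_singleton]
    rw [h5, Ideal.span_singleton_pow, Ideal.mem_span_singleton] at h4
    obtain ⟨g, hg⟩ := h4
    apply hf.not_isUnit
    refine IsUnit.of_mul_eq_one g ?_
    apply mul_left_cancel₀ hf.ne_zero
    rw [← mul_assoc, ← pow_two, ← hg, mul_one]
  · intro w
    obtain ⟨⟨j, hj⟩, hjm⟩ := Algebra.Extension.Cotangent.mk_surjective w.1
    obtain ⟨g, hg⟩ := (hker j).1 hj
    refine ⟨φ g, ?_⟩
    apply Algebra.Extension.h1Cotangentι_ext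
    refine (Algebra.Extension.H1Cotangent.val_smul (P := P) (φ g)
      (⟨Algebra.Extension.Cotangent.mk fk, hcc⟩ : P.H1Cotangent)).trans ?_
    rw [← hjm]
    have h1 : (⟨j, hj⟩ : P.ker) = (show P.Ring from g) • fk := by
      apply Subtype.ext
      change j = g * f
      rw [hg, mul_comm]
    rw [h1, map_smul]
    exact (algebraMap_smul L (show P.Ring from g)
      (Algebra.Extension.Cotangent.mk fk : P.Cotangent))

lemma finrank_h1_localize {A B K L : Type*} [CommRing A] [CommRing B] [Field K] [Field L]
    [Algebra A B] [Algebra A K] [Algebra A L] [Algebra B L] [Algebra K L]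
    [IsScalarTower A B L] [IsScalarTower A K L] (M : Submonoid A) [IsLocalization M K]
    (N : Submonoid B) [IsLocalization N L] :
    Module.finrank L (L ⊗[B] Algebra.H1Cotangent A B) =
      Module.finrank L (Algebra.H1Cotangent K L) := by
  rw [(Algebra.tensorH1CotangentOfIsLocalization A L N).finrank_eq]
  have : Algebra.FormallyEtale A K := Algebra.FormallyEtale.of_isLocalization M
  have hs : Subsingleton (Algebra.H1Cotangent A K) := inferInstance
  have ho : Subsingleton (Ω[K⁄A]) := inferInstance
  refine (LinearEquiv.ofBijective (Algebra.H1Cotangent.map A K L L) ⟨?_, ?_⟩).finrank_eq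
  · rw [injective_iff_map_eq_zero]
    intro m hm
    obtain ⟨z, hz⟩ := (Algebra.H1Cotangent.exact_liftBaseChange_map_of_flat A K L m).1 hm
    rw [← hz, Subsingleton.elim z 0, map_zero]
  · intro m
    exact (Algebra.H1Cotangent.exact_map_δ A K L m).1 (Subsingleton.elim _ _)

end hsec

theorem h1Cotangent_integers_of_inseparable
    {K : Type*} [Field K]
    (vK : AddValuation K (WithTop ℝ)) (hnt : vK.IsNontrivial)
    (f : Polynomial K) (hmonic : f.Monic) [hirr : Fact (Irreducible f)]
    (hder : Polynomial.derivative f = 0)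
    (hcoeff : ∀ i : ℕ, 0 ≤ vK (f.coeff i))
    (vL : AddValuation (AdjoinRoot f) (WithTop ℝ))
    (hext : ∀ x : K, vL (algebraMap K (AdjoinRoot f) x) = vK x)
    [Algebra vK.unitBall vL.unitBall]
    (hcomp : ∀ x : vK.unitBall,
      (algebraMap vK.unitBall vL.unitBall x : AdjoinRoot f) =
        algebraMap K (AdjoinRoot f) (x : K)) :
    Nontrivial (Algebra.H1Cotangent vK.unitBall vL.unitBall) ∧
    (∀ (r : vL.unitBall) (m : Algebra.H1Cotangent vK.unitBall vL.unitBall),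
      r • m = 0 → r = 0 ∨ m = 0) ∧
    Module.finrank (AdjoinRoot f)
      (TensorProduct vL.unitBall (AdjoinRoot f)
        (Algebra.H1Cotangent vK.unitBall vL.unitBall)) = 1 := by
  have hfr : Module.finrank (AdjoinRoot f)
      (TensorProduct vL.unitBall (AdjoinRoot f)
        (Algebra.H1Cotangent vK.unitBall vL.unitBall)) = 1 := by
    have : IsScalarTower vK.unitBall vL.unitBall (AdjoinRoot f) :=
      IsScalarTower.of_algebraMap_eq fun x => (hcomp x).symm
    rw [finrank_h1_localize (K := K) (nonZeroDivisors vK.unitBall) (nonZeroDivisors vL.unitBall)]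
    exact finrank_h1_adjoinRoot (AdjoinRoot.mkₐ f) AdjoinRoot.mk_surjective f hirr.out
      (fun g => AdjoinRoot.mk_eq_zero) hder
  refine ⟨?_, ?_, hfr⟩
  · rw [← not_subsingleton_iff_nontrivial]
    intro hs
    rw [Module.finrank_zero_of_subsingleton] at hfr
    exact zero_ne_one hfr
  · obtain ⟨p, hp⟩ := CharP.exists K
    have hp0 : p ≠ 0 := by
      rintro rfl
      have : CharZero K := CharP.charP_to_charZero K
      have h1 := Polynomial.derivative_eq_zero.1 hder
      exact hirr.out.natDegree_pos.ne' h1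
    have hpp : Fact p.Prime := ⟨(CharP.char_is_prime_or_zero K p).resolve_right hp0⟩
    have hpL : CharP (AdjoinRoot f) p :=
      charP_of_injective_algebraMap (algebraMap K (AdjoinRoot f)).injective p
    exact fun r m h => h1_unitBall_tf p vK vL r m h
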